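/- arXiv:2309.15184 — 3 statements merged into one kernel-verified Lean document; each statement's English description precedes it below -/
import Mathlib

section
/- For every odd prime d, every two-qudit gate of the third level of the Clifford hierarchy is semi-Clifford: if G ∈ C_3^2, then there exist Clifford gates C₁, C₂ ∈ C_2^2 and a diagonal matrix D ∈ C_3^2 such that G = C₁ D C₂. -/
open Matrix

noncomputable section

/-- The space of `n`-qudit gates: `d^n × d^n` complex matrices indexed by `(ZMod d)^n`. -/
abbrev Mat (d n : ℕ) := Matrix (Fin n → ZMod d) (Fin n → ZMod d) ℂ

/-- The primitive `d`-th root of unity `ω = exp(2πi/d)`. -/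
def omega (d : ℕ) : ℂ := Complex.exp (2 * Real.pi * Complex.I / d)

/-- `ω` raised to the canonical integer lift of `c : ZMod d`. -/
def omegaPow (d : ℕ) (c : ZMod d) : ℂ := omega d ^ c.val

/-- The Pauli gate `Z^p`, acting by `Z^p |z⟩ = ω^(p·z) |z⟩`. -/
def ZP (d n : ℕ) [NeZero d] (p : Fin n → ZMod d) : Mat d n :=
  Matrix.diagonal fun z => omegaPow d (p ⬝ᵥ z)

/-- The Pauli gate `X^q`, acting by `X^q |z⟩ = |z + q⟩`. -/
def XQ (d n : ℕ) [NeZero d] (q : Fin n → ZMod d) : Mat d n :=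
  Matrix.of fun z' z => if z' = z + q then 1 else 0

/-- The basic Pauli gate `Z_i`. -/
def Zi (d n : ℕ) [NeZero d] (i : Fin n) : Mat d n := ZP d n (Pi.single i 1)

/-- The basic Pauli gate `X_i`. -/
def Xi (d n : ℕ) [NeZero d] (i : Fin n) : Mat d n := XQ d n (Pi.single i 1)

/-- The Pauli group `C_1^n`. -/
def Pauli (d n : ℕ) [NeZero d] : Set (Mat d n) :=
  { M | ∃ (c : ZMod d) (p q : Fin n → ZMod d), M = omegaPow d c • (ZP d n p * XQ d n q) }

/-- The Clifford group `C_2^n`. -/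
def Clifford (d n : ℕ) [NeZero d] : Set (Mat d n) :=
  { C | C ∈ Matrix.unitaryGroup (Fin n → ZMod d) ℂ ∧ ∀ P ∈ Pauli d n, C * P * Cᴴ ∈ Pauli d n }

/-- The third level `C_3^n` of the Clifford hierarchy. -/
def Third (d n : ℕ) [NeZero d] : Set (Mat d n) :=
  { G | G ∈ Matrix.unitaryGroup (Fin n → ZMod d) ℂ ∧ ∀ P ∈ Pauli d n, G * P * Gᴴ ∈ Clifford d n }

/-- The quadratic diagonal gate `D_Φ |z⟩ = ω^(zᵀ Φ z) |z⟩`. -/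
def quadGate (d n : ℕ) [NeZero d] (Φ : Matrix (Fin n) (Fin n) (ZMod d)) : Mat d n :=
  Matrix.diagonal fun z => omegaPow d (z ⬝ᵥ (Φ *ᵥ z))

/-- A gate is semi-Clifford if it is `C₁ D C₂` for Cliffords `C₁, C₂` and a
diagonal third-level gate `D`. -/
def SemiClifford (d n : ℕ) [NeZero d] (G : Mat d n) : Prop :=
  ∃ C₁ ∈ Clifford d n, ∃ C₂ ∈ Clifford d n, ∃ D ∈ Third d n, D.IsDiag ∧ G = C₁ * D * C₂

/-- A Clifford gate is almost diagonal if it is `D_Φ P` for symmetric `Φ` and Pauli `P`. -/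
def AlmostDiag (d n : ℕ) [NeZero d] (M : Mat d n) : Prop :=
  ∃ Φ : Matrix (Fin n) (Fin n) (ZMod d), Φ.IsSymm ∧ ∃ P ∈ Pauli d n, M = quadGate d n Φ * P

/-- A third-level gate is simplified if its conjugate tuple consists of
almost diagonal Clifford gates. -/
def Simplified (d n : ℕ) [NeZero d] (G : Mat d n) : Prop :=
  ∀ i : Fin n, AlmostDiag d n (G * Zi d n i * Gᴴ) ∧ AlmostDiag d n (G * Xi d n i * Gᴴ)

/-- The symplectic product on `(ZMod d)⁴`. -/
def symp4 (d : ℕ) (u v : Fin 4 → ZMod d) : ZMod d :=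
  u 0 * v 1 - u 1 * v 0 + u 2 * v 3 - u 3 * v 2


set_option linter.all false
set_option linter.unusedSimpArgs false
set_option linter.unusedVariables false

section linalg
variable {d : ℕ} [Fact d.Prime]

abbrev VV (d : ℕ) := (Fin 2 → ZMod d) × (Fin 2 → ZMod d)

theorem fixed_vec {M : Type*} [AddCommGroup M] [Module (ZMod d) M] [Finite M] [Nontrivial M]
    {V : Type*} [AddCommGroup V] [Module (ZMod d) V]
    (S : V → M →ₗ[ZMod d] M) (S0 : ∀ x, S 0 x = x) (Sadd : ∀ v w x, S (v + w) x = S v (S w x)) :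
    ∃ m : M, m ≠ 0 ∧ ∀ v, S v m = m := by
  let _ : MulAction (Multiplicative V) M :=
    { smul := fun g x => S g.toAdd x
      one_smul := fun x => S0 x
      mul_smul := fun g h x => Sadd g.toAdd h.toAdd x }
  have hP : IsPGroup d (Multiplicative V) := by
    intro g
    refine ⟨1, ?_⟩
    rw [pow_one]
    change Multiplicative.ofAdd (d • g.toAdd) = 1
    rw [← Nat.cast_smul_eq_nsmul (ZMod d)]
    simp
  have hc : d ∣ Nat.card M := by
    obtain ⟨m, hm⟩ := exists_ne (0 : M)
    have h : addOrderOf m = d := by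
      apply addOrderOf_eq_prime _ hm
      rw [← Nat.cast_smul_eq_nsmul (ZMod d)]
      simp
    rw [← h]
    exact addOrderOf_dvd_natCard m
  have h0 : (0 : M) ∈ MulAction.fixedPoints (Multiplicative V) M := by
    intro g
    exact map_zero (S g.toAdd)
  obtain ⟨b, hb, hne⟩ := hP.exists_fixed_point_of_prime_dvd_card_of_fixed_point M hc h0
  exact ⟨b, hne.symm, fun v => hb (Multiplicative.ofAdd v)⟩

variable {V : Type*} [AddCommGroup V] [Module (ZMod d) V]
  (B : V →ₗ[ZMod d] V →ₗ[ZMod d] ZMod d)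

theorem alt_swap (alt : ∀ v, B v v = 0) (v w : V) : B v w = - B w v := by
  have := alt (v + w)
  simp only [map_add, LinearMap.add_apply, alt] at this
  linear_combination this

/-- complement of an isotropic pair -/
theorem complement (alt : ∀ v, B v v = 0) (nd : ∀ v, (∀ w, B v w = 0) → v = 0)
    (k1 k2 : V) (iso : B k1 k2 = 0) (ind : ∀ a b : ZMod d, a • k1 + b • k2 = 0 → a = 0 ∧ b = 0) :
    ∃ l1 l2, B k1 l1 = 1 ∧ B k1 l2 = 0 ∧ B k2 l1 = 0 ∧ B k2 l2 = 1 ∧ B l1 l2 = 0 := by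
  have sel : ∀ k, k ≠ 0 → ∃ x, B k x = 1 := by
    intro k hk
    by_contra! h
    apply hk; apply nd
    intro w
    by_contra hw
    apply h ((B k w)⁻¹ • w)
    simp [hw]
  have h1 : k1 ≠ 0 := by
    rintro rfl
    have := ind 1 0 (by simp)
    simp at this
  obtain ⟨x, hx⟩ := sel k1 h1
  have h2 : k2 - (B k2 x) • k1 ≠ 0 := by
    intro h
    have := ind (-(B k2 x)) 1 (by rw [← h]; module)
    simp at this
  obtain ⟨y, hy⟩ := sel _ h2
  simp only [map_sub, map_smul, LinearMap.sub_apply, LinearMap.smul_apply, smul_eq_mul] at hy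
  set c := B k2 x with hc
  set l2 := y - (B k1 y) • x with hl2
  set l1 := x - c • l2 with hl1
  have e12 : B k1 l2 = 0 := by simp [hl2, hx]
  have e22 : B k2 l2 = 1 := by
    simp only [hl2, map_sub, map_smul, smul_eq_mul, ← hc]; linear_combination hy
  have e11 : B k1 l1 = 1 := by simp [hl1, hx, e12]
  have e21 : B k2 l1 = 0 := by simp [hl1, e22, hc]
  refine ⟨l1, l2 + (B l1 l2) • k1, e11, ?_, e21, ?_, ?_⟩
  · simp [e12, alt]
  · rw [map_add, map_smul, e22, alt_swap B alt k2 k1, iso]; simp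
  · rw [map_add, map_smul, alt_swap B alt l1 k1, e11]; simp

/-- linear map sending the standard symplectic basis to `k1,k2,l1,l2` -/
def gmap (k1 k2 l1 l2 : V) : VV d →ₗ[ZMod d] V where
  toFun v := v.1 0 • k1 + v.1 1 • k2 + v.2 0 • l1 + v.2 1 • l2
  map_add' v w := by simp; module
  map_smul' c v := by simp; module

theorem expand [Module.Finite (ZMod d) V] (hV : Module.finrank (ZMod d) V = 4)
    (alt : ∀ v, B v v = 0)
    (k1 k2 l1 l2 : V) (hk : B k1 k2 = 0) (h11 : B k1 l1 = 1) (h12 : B k1 l2 = 0)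
    (h21 : B k2 l1 = 0) (h22 : B k2 l2 = 1) (hl : B l1 l2 = 0) (x : V) :
    ∃ a b c e : ZMod d, x = a • k1 + b • k2 + c • l1 + e • l2 := by
  have inj : Function.Injective (gmap (d := d) k1 k2 l1 l2) := by
    rw [← LinearMap.ker_eq_bot, LinearMap.ker_eq_bot']
    intro m hm
    have hm' : m.1 0 • k1 + m.1 1 • k2 + m.2 0 • l1 + m.2 1 • l2 = 0 := hm
    have e1 := congrArg (B k1) hm'
    have e2 := congrArg (B k2) hm'
    have e3 := congrArg (B l1) hm'
    have e4 := congrArg (B l2) hm'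
    simp [alt, hk, h11, h12, h21, h22, hl, alt_swap B alt k2 k1, alt_swap B alt l1 k1,
      alt_swap B alt l2 k1, alt_swap B alt l1 k2, alt_swap B alt l2 k2, alt_swap B alt l2 l1]
      at e1 e2 e3 e4
    ext i
    · fin_cases i <;> simp [e3, e4]
    · fin_cases i <;> simp [e1, e2]
  have surj := (LinearMap.injective_iff_surjective_of_finrank_eq_finrank
    (by simp [hV])).1 inj
  obtain ⟨v, hv⟩ := surj x
  exact ⟨_, _, _, _, hv.symm⟩

theorem pair_of_two (K : Submodule (ZMod d) V) [Module.Finite (ZMod d) V]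
    (hK : 2 ≤ Module.finrank (ZMod d) K)
    (k : V) (hk : k ≠ 0) : ∃ k' ∈ K, ∀ a b : ZMod d, a • k + b • k' = 0 → a = 0 ∧ b = 0 := by
  have : ¬ K ≤ Submodule.span (ZMod d) {k} := by
    intro h
    have := Submodule.finrank_mono h
    rw [finrank_span_singleton hk] at this
    omega
  obtain ⟨k', h1, h2⟩ := SetLike.not_le_iff_exists.1 this
  refine ⟨k', h1, fun a b h => ?_⟩
  have hb : b = 0 := by
    by_contra hb
    apply h2
    rw [Submodule.mem_span_singleton]
    refine ⟨-(b⁻¹ * a), ?_⟩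
    have : b⁻¹ • (a • k + b • k') = 0 := by rw [h]; simp
    rw [smul_add, smul_smul, smul_smul, inv_mul_cancel₀ hb, one_smul] at this
    rw [neg_smul]
    exact (eq_neg_of_add_eq_zero_right this).symm
  subst hb
  simpa [hk] using h

theorem exists_ne_of_pos (K : Submodule (ZMod d) V)
    (hK : 1 ≤ Module.finrank (ZMod d) K) : ∃ k ∈ K, k ≠ 0 := by
  have : K ≠ ⊥ := by
    rintro rfl
    simp at hK
  exact (Submodule.ne_bot_iff K).1 this

theorem ker_dim (K : Submodule (ZMod d) V) [Module.Finite (ZMod d) V]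
    (f : V →ₗ[ZMod d] ZMod d) :
    Module.finrank (ZMod d) K ≤ Module.finrank (ZMod d) ↥(K ⊓ LinearMap.ker f) + 1 := by
  have h1 := Submodule.finrank_sup_add_finrank_inf_eq K (LinearMap.ker f)
  have h2 := LinearMap.finrank_range_add_finrank_ker f
  have h3 : Module.finrank (ZMod d) (LinearMap.range f) ≤ 1 := by
    simpa using Submodule.finrank_le (LinearMap.range f)
  have h4 := Submodule.finrank_le (K ⊔ LinearMap.ker f)
  omega

theorem iso_of_three (K : Submodule (ZMod d) V) [Module.Finite (ZMod d) V]
    (hK : 3 ≤ Module.finrank (ZMod d) K) :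
    ∃ k1 ∈ K, ∃ k2 ∈ K, B k1 k2 = 0 ∧ ∀ a b : ZMod d, a • k1 + b • k2 = 0 → a = 0 ∧ b = 0 := by
  obtain ⟨k, hk, hk0⟩ := exists_ne_of_pos K (by omega)
  have := ker_dim K (B k)
  obtain ⟨k', h1, h2⟩ := pair_of_two (K ⊓ LinearMap.ker (B k)) (by omega) k hk0
  exact ⟨k, hk, k', h1.1, h1.2, h2⟩

theorem flag [Finite V] [Module.Finite (ZMod d) V] (hV : Module.finrank (ZMod d) V = 4)
    (alt : ∀ v, B v v = 0)
    (S : V → V →ₗ[ZMod d] V) (S0 : ∀ x, S 0 x = x) (Sadd : ∀ v w x, S (v + w) x = S v (S w x))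
    (SB : ∀ v x y, B (S v x) (S v y) = B x y) :
    ∃ e f : V, (∀ a b : ZMod d, a • e + b • f = 0 → a = 0 ∧ b = 0) ∧ B e f = 0 ∧
      (∀ v, S v e = e) ∧ ∀ v, ∃ c : ZMod d, S v f = f + c • e := by
  have : Nontrivial V := Module.nontrivial_of_finrank_pos (R := ZMod d) (by omega)
  obtain ⟨e, he0, he⟩ := fixed_vec S S0 Sadd
  let F : Submodule (ZMod d) V := LinearMap.ker (B e)
  have hF : ∀ v, ∀ x ∈ F, S v x ∈ F := by
    intro v x hx
    have hx : B e x = 0 := hx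
    change B e (S v x) = 0
    rw [← hx, ← SB v e x, he]
  let E : Submodule (ZMod d) F := (Submodule.span (ZMod d) {e}).comap F.subtype
  let R : V → F →ₗ[ZMod d] F := fun v => (S v).restrict (hF v)
  have hE : ∀ v, E ≤ E.comap (R v) := by
    intro v x hx
    obtain ⟨c, hc⟩ := Submodule.mem_span_singleton.1 (Submodule.mem_comap.1 hx)
    rw [Submodule.mem_comap, Submodule.mem_comap]
    refine Submodule.mem_span_singleton.2 ⟨c, ?_⟩
    change c • e = S v (x : V)
    have hc : c • e = (x : V) := hc
    rw [← hc, map_smul, he]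
  let Q : V → (F ⧸ E) →ₗ[ZMod d] (F ⧸ E) := fun v => E.mapQ E (R v) (hE v)
  have hF3 := ker_dim (⊤ : Submodule (ZMod d) V) (B e)
  have hF3 : 3 ≤ Module.finrank (ZMod d) F := by
    rw [top_inf_eq, finrank_top, hV] at hF3
    change 4 ≤ Module.finrank (ZMod d) F + 1 at hF3
    omega
  obtain ⟨k', h1, h2⟩ := pair_of_two F (by omega) e he0
  have : Nontrivial (F ⧸ E) := by
    refine ⟨⟨E.mkQ ⟨k', h1⟩, 0, ?_⟩⟩
    intro h
    rw [Submodule.mkQ_apply, Submodule.Quotient.mk_eq_zero] at h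
    obtain ⟨c, hc⟩ := Submodule.mem_span_singleton.1 (Submodule.mem_comap.1 h)
    have hc : c • e = k' := hc
    have := h2 c (-1) (by rw [hc]; module)
    simp at this
  have : Finite (F ⧸ E) := Finite.of_surjective _ E.mkQ_surjective
  obtain ⟨m, hm0, hm⟩ := fixed_vec Q
    (by
      intro x
      obtain ⟨x, rfl⟩ := E.mkQ_surjective x
      change E.mkQ (R 0 x) = _
      congr 1
      exact Subtype.ext (S0 x))
    (by
      intro v w x
      obtain ⟨x, rfl⟩ := E.mkQ_surjective x
      change E.mkQ (R (v + w) x) = E.mkQ (R v (R w x))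
      congr 1
      exact Subtype.ext (Sadd v w x))
  obtain ⟨f, rfl⟩ := E.mkQ_surjective m
  have hf : (f : V) ∉ Submodule.span (ZMod d) {e} := by
    intro h
    apply hm0
    rw [Submodule.mkQ_apply, Submodule.Quotient.mk_eq_zero]
    exact h
  refine ⟨e, f, ?_, f.2, he, ?_⟩
  · intro a b h
    have hb : b = 0 := by
      by_contra hb
      apply hf
      rw [Submodule.mem_span_singleton]
      refine ⟨-(b⁻¹ * a), ?_⟩
      have : b⁻¹ • (a • e + b • (f : V)) = 0 := by rw [h]; simp
      rw [smul_add, smul_smul, smul_smul, inv_mul_cancel₀ hb, one_smul] at this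
      rw [neg_smul]
      exact (eq_neg_of_add_eq_zero_right this).symm
    subst hb
    simpa [he0] using h
  · intro v
    have h : E.mkQ (R v f) = E.mkQ f := hm v
    rw [Submodule.mkQ_apply, Submodule.mkQ_apply, Submodule.Quotient.eq] at h
    obtain ⟨c, hc⟩ := Submodule.mem_span_singleton.1 (Submodule.mem_comap.1 h)
    have hc : c • e = S v f - f := hc
    exact ⟨c, by rw [hc]; module⟩

theorem linalg_main [Finite V] [Module.Finite (ZMod d) V] (hV : Module.finrank (ZMod d) V = 4)
    (h2 : (2 : ZMod d) ≠ 0)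
    (alt : ∀ v, B v v = 0) (nd : ∀ v, (∀ w, B v w = 0) → v = 0)
    (S : V → V →ₗ[ZMod d] V) (S0 : ∀ x, S 0 x = x) (Sadd : ∀ v w x, S (v + w) x = S v (S w x))
    (SB : ∀ v x y, B (S v x) (S v y) = B x y)
    (β : V → V →ₗ[ZMod d] ZMod d)
    (βadd : ∀ v w y, β (v + w) y = β w y + β v (S w y))
    (ha : ∀ v, (∀ x, S v x = x) → ∃ a, (∀ y, β v y = B a y) ∧ (∀ w, S w a = a) ∧
      ∀ w, β w a = B w v) :
    ∃ k1 k2 : V, (∀ a b : ZMod d, a • k1 + b • k2 = 0 → a = 0 ∧ b = 0) ∧ B k1 k2 = 0 ∧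
      (∀ x, S k1 x = x) ∧ (∀ x, S k2 x = x) := by
  obtain ⟨e, f, ind, hef, hSe, hSf⟩ := flag B hV alt S S0 Sadd SB
  obtain ⟨e', f', hee, hef', hfe, hff, hef''⟩ := complement B alt nd e f hef ind
  have hfe0 : B f e = 0 := by rw [alt_swap B alt, hef, neg_zero]
  have he'e : B e' e = -1 := by rw [alt_swap B alt, hee]
  have hf'e : B f' e = 0 := by rw [alt_swap B alt, hef', neg_zero]
  have he'f : B e' f = 0 := by rw [alt_swap B alt, hfe, neg_zero]
  have hf'f : B f' f = -1 := by rw [alt_swap B alt, hff]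
  have hf'e' : B f' e' = 0 := by rw [alt_swap B alt, hef'', neg_zero]
  have exp := expand B hV alt e f e' f' hef hee hef' hfe hff hef''
  choose lam hlam using hSf
  have H1 : ∀ v, ∃ m n : ZMod d, S v f' = f' + m • f + n • e := by
    intro v
    obtain ⟨a, b, c, g, h⟩ := exp (S v f')
    have h1 := SB v e f'
    have h2 := SB v f f'
    rw [hSe, h] at h1
    rw [hlam, h] at h2
    simp [alt, hef, hee, hef', hfe, hff, hef'', hfe0] at h1 h2
    subst h1
    simp at h2
    subst h2
    exact ⟨b, a, by rw [h]; module⟩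
  choose mu nu hmn using H1
  have H2 : ∀ v, ∃ r : ZMod d, S v e' = e' - lam v • f' + (nu v - mu v * lam v) • f + r • e := by
    intro v
    obtain ⟨a, b, c, g, h⟩ := exp (S v e')
    have h1 := SB v e e'
    have h2 := SB v f e'
    have h3 := SB v f' e'
    rw [hSe, h] at h1
    rw [hlam, h] at h2
    rw [hmn, h] at h3
    simp [alt, hef, hee, hef', hfe, hff, hef'', hfe0, he'e, hf'e, he'f, hf'f, hf'e'] at h1 h2 h3
    subst h1
    have h2 : g = - lam v := by linear_combination h2
    subst h2
    have h3 : b = nu v - mu v * lam v := by linear_combination -h3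
    subst h3
    exact ⟨a, by rw [h]; module⟩
  choose rho hrho using H2
  have Scomm : ∀ v w x, S v (S w x) = S w (S v x) := by
    intro v w x
    rw [← Sadd, add_comm, Sadd]
  have memK : ∀ v, lam v = 0 → mu v = 0 → nu v = 0 → rho v = 0 → ∀ x, S v x = x := by
    intro v h1 h2 h3 h4 x
    obtain ⟨a, b, c, g, h⟩ := exp x
    rw [h]
    simp [hSe, hlam, hmn, hrho, h1, h2, h3, h4]
  have lam_add : ∀ v w, lam (v + w) = lam v + lam w := by
    intro v w
    have h := Sadd v w f
    simp only [hlam, map_add, map_smul, hSe] at h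
    have h := congrArg (B e') h
    simp [he'e, he'f] at h
    linear_combination -h
  have mu_add : ∀ v w, mu (v + w) = mu v + mu w := by
    intro v w
    have h := Sadd v w f'
    simp only [hlam, hmn, map_add, map_smul, hSe] at h
    have h := congrArg (B f') h
    simp [alt, hf'e, hf'f] at h
    linear_combination -h
  have nu_add : ∀ v w, nu (v + w) = nu v + nu w + mu w * lam v := by
    intro v w
    have h := Sadd v w f'
    simp only [hlam, hmn, map_add, map_smul, hSe] at h
    have h := congrArg (B e') h
    simp [alt, he'e, he'f, hef''] at h
    linear_combination -h
  have rho_add : ∀ v w, rho (v + w) = rho v + rho w - lam w * nu v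
      + (nu w - mu w * lam w) * lam v := by
    intro v w
    have h := Sadd v w e'
    simp only [hlam, hmn, hrho, map_add, map_smul, map_sub, hSe] at h
    have h := congrArg (B e') h
    simp [alt, he'e, he'f, hef''] at h
    linear_combination -h
  let Kg : AddSubgroup V :=
    { carrier := {v | ∀ x, S v x = x}
      zero_mem' := S0
      add_mem' := fun {v w} hv hw x => by rw [Sadd, hw, hv]
      neg_mem' := fun {v} hv x => by
        rw [← hv (S (-v) x), ← Sadd, add_neg_cancel, S0] }
  let K : Submodule (ZMod d) V := AddSubgroup.toZModSubmodule d Kg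
  have hK : ∀ v, v ∈ K ↔ ∀ x, S v x = x := fun v => Iff.rfl
  have fin3 : 3 ≤ Module.finrank (ZMod d) K → ∃ k1 k2 : V,
      (∀ a b : ZMod d, a • k1 + b • k2 = 0 → a = 0 ∧ b = 0) ∧ B k1 k2 = 0 ∧
      (∀ x, S k1 x = x) ∧ (∀ x, S k2 x = x) := by
    intro h
    obtain ⟨k1, h1, k2, h2, h3, h4⟩ := iso_of_three B K h
    exact ⟨k1, k2, h4, h3, h1, h2⟩
  have fin2 : 2 ≤ Module.finrank (ZMod d) K → (∀ k1 ∈ K, ∀ k2 ∈ K, B k1 k2 = 0) → ∃ k1 k2 : V,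
      (∀ a b : ZMod d, a • k1 + b • k2 = 0 → a = 0 ∧ b = 0) ∧ B k1 k2 = 0 ∧
      (∀ x, S k1 x = x) ∧ (∀ x, S k2 x = x) := by
    intro h hi
    obtain ⟨k, hk, hk0⟩ := exists_ne_of_pos K (by omega)
    obtain ⟨k', h1, h2⟩ := pair_of_two K h k hk0
    exact ⟨k, k', h2, hi _ hk _ h1, hk, h1⟩
  have kerdim : ∀ g : V →ₗ[ZMod d] ZMod d, 3 ≤ Module.finrank (ZMod d) (LinearMap.ker g) := by
    intro g
    have h := ker_dim (⊤ : Submodule (ZMod d) V) g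
    rw [top_inf_eq, finrank_top, hV] at h
    omega
  let lamL : V →ₗ[ZMod d] ZMod d := (AddMonoidHom.mk' lam lam_add).toZModLinearMap d
  let muL : V →ₗ[ZMod d] ZMod d := (AddMonoidHom.mk' mu mu_add).toZModLinearMap d
  by_cases hl : ∃ v0, lam v0 ≠ 0
  · obtain ⟨v0, hv0⟩ := hl
    have hmu : ∀ w, lam w = 0 → mu w = 0 := by
      intro w hw
      have h1 := nu_add v0 w
      have h2 := nu_add w v0
      rw [add_comm w v0, h1, hw] at h2
      have : mu w * lam v0 = 0 := by linear_combination h2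
      simpa [hv0] using this
    have hnu : ∀ w, lam w = 0 → nu w = 0 := by
      intro w hw
      have h3 := rho_add v0 w
      have h4 := rho_add w v0
      rw [add_comm w v0, h3, hw, hmu w hw] at h4
      have : 2 * (nu w * lam v0) = 0 := by linear_combination h4
      simpa [hv0, h2] using this
    let rg : LinearMap.ker lamL →+ ZMod d := AddMonoidHom.mk' (fun w => rho w) (by
      intro v w
      have hv : lam v = 0 := v.2
      have hw : lam w = 0 := w.2
      change rho ((v : V) + w) = _
      rw [rho_add, hw, hv]
      ring)
    let rL : LinearMap.ker lamL →ₗ[ZMod d] ZMod d := rg.toZModLinearMap d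
    have hd2 : 2 ≤ Module.finrank (ZMod d) K := by
      have h1 := ker_dim (⊤ : Submodule (ZMod d) (LinearMap.ker lamL)) rL
      rw [top_inf_eq, finrank_top] at h1
      have h3 := kerdim lamL
      have h4 : (LinearMap.ker rL).map (LinearMap.ker lamL).subtype ≤ K := by
        rintro _ ⟨w, hw, rfl⟩
        have hr : rho w = 0 := hw
        have hl : lam w = 0 := w.2
        exact (hK _).2 (memK _ hl (hmu _ hl) (hnu _ hl) hr)
      have h5 := Submodule.finrank_mono h4
      rw [Submodule.finrank_map_subtype_eq] at h5
      omega
    apply fin2 hd2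
    have key : ∀ k ∈ K, ∃ a : V, (∀ w, β w a = B w k) ∧ (∀ y, β k y = B a y) ∧ ∃ p q r : ZMod d,
        a = p • e + q • f + r • f' ∧ q * lam v0 + r * nu v0 = 0 := by
      intro k hk
      obtain ⟨a, h1, h2, h3⟩ := ha k hk
      refine ⟨a, h3, h1, ?_⟩
      obtain ⟨p, q, s, r, hh⟩ := exp a
      have h4 := h2 v0
      rw [hh] at h4
      simp only [hlam, hmn, hrho, map_add, map_smul, map_sub, hSe] at h4
      have h5 := congrArg (B f) h4
      simp [alt, hef, hee, hef', hfe, hff, hef'', hfe0, he'e, hf'e, he'f, hf'f, hf'e', hv0] at h5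
      have h6 := congrArg (B e') h4
      simp [alt, hef, hee, hef', hfe, hff, hef'', hfe0, he'e, hf'e, he'f, hf'f, hf'e', h5] at h6
      exact ⟨p, q, r, by rw [hh, h5]; module, by linear_combination -h6⟩
    intro k1 hk1 k2 hk2
    obtain ⟨a1, h1, h1', p1, q1, r1, e1, g1⟩ := key k1 hk1
    obtain ⟨a2, h2, h2', p2, q2, r2, e2, g2⟩ := key k2 hk2
    rw [← h2, h1', e1, e2]
    simp [alt, hef, hee, hef', hfe, hff, hef'', hfe0, he'e, hf'e, he'f, hf'f, hf'e']
    apply mul_left_cancel₀ hv0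
    linear_combination r2 * g1 - r1 * g2
  · push Not at hl
    have nu_add' : ∀ v w, nu (v + w) = nu v + nu w := by
      intro v w; rw [nu_add, hl]; ring
    have rho_add' : ∀ v w, rho (v + w) = rho v + rho w := by
      intro v w; rw [rho_add, hl, hl]; ring
    let nuL : V →ₗ[ZMod d] ZMod d := (AddMonoidHom.mk' nu nu_add').toZModLinearMap d
    let rhoL : V →ₗ[ZMod d] ZMod d := (AddMonoidHom.mk' rho rho_add').toZModLinearMap d
    let Φ : V →ₗ[ZMod d] (ZMod d × ZMod d × ZMod d) := muL.prod (nuL.prod rhoL)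
    have hΦ : ∀ v, Φ v = (mu v, nu v, rho v) := fun v => rfl
    have kerK : LinearMap.ker Φ = K := by
      ext v
      rw [LinearMap.mem_ker, hΦ, hK]
      constructor
      · intro h
        simp at h
        exact memK v (hl v) h.1 h.2.1 h.2.2
      · intro h
        have h1 := hmn v
        have h2 := hrho v
        rw [h] at h1 h2
        have h3 := congrArg (B f') h1
        have h4 := congrArg (B e') h1
        have h5 := congrArg (B e') h2
        simp [alt, hl, hef, hee, hef', hfe, hff, hef'', hfe0, he'e, hf'e, he'f, hf'f, hf'e']
          at h3 h4 h5
        simp [h3, h4, h5]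
    have hrn := LinearMap.finrank_range_add_finrank_ker Φ
    rw [kerK, hV] at hrn
    have rel1 : ∀ v w, mu w * β v f + nu w * β v e = mu v * β w f + nu v * β w e := by
      intro v w
      have h1 := βadd v w f'
      have h2 := βadd w v f'
      rw [add_comm w v, h1, hmn, hmn] at h2
      simp at h2
      linear_combination h2
    have rel2 : ∀ v w, nu w * β v f + rho w * β v e = nu v * β w f + rho v * β w e := by
      intro v w
      have h1 := βadd v w e'
      have h2 := βadd w v e'
      rw [add_comm w v, h1, hrho, hrho] at h2
      simp [hl] at h2
      linear_combination h2
    by_cases hs : Function.Surjective Φ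
    · exfalso
      have : Module.finrank (ZMod d) (LinearMap.range Φ) = 3 := by
        rw [LinearMap.range_eq_top.2 hs, finrank_top]; simp
      obtain ⟨k, hk, hk0⟩ := exists_ne_of_pos K (by omega)
      obtain ⟨w1, hw1⟩ := hs (1, 0, 0)
      obtain ⟨w2, hw2⟩ := hs (0, 1, 0)
      obtain ⟨w3, hw3⟩ := hs (0, 0, 1)
      have hk' := hk
      rw [← kerK, LinearMap.mem_ker] at hk'
      rw [hΦ] at hw1 hw2 hw3 hk'
      simp at hw1 hw2 hw3 hk'
      obtain ⟨m1, n1, r1⟩ := hw1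
      obtain ⟨m2, n2, r2⟩ := hw2
      obtain ⟨m3, n3, r3⟩ := hw3
      obtain ⟨mk, nk, rk⟩ := hk'
      have a13 := rel1 w1 w3
      have b13 := rel2 w1 w3
      have a12 := rel1 w1 w2
      have b12 := rel2 w1 w2
      have a23 := rel1 w2 w3
      have b23 := rel2 w2 w3
      have ak1 := rel1 k w1
      have ak2 := rel1 k w2
      simp [m1, n1, r1, m2, n2, r2, m3, n3, r3, mk, nk, rk] at a13 b13 a12 b12 a23 b23 ak1 ak2
      have all : ∀ v, β v f = 0 ∧ β v e = 0 := by
        intro v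
        have c1 := rel1 v w1
        have c2 := rel1 v w2
        simp [m1, n1, r1, m2, n2, r2] at c1 c2
        rw [c1, c2]
        constructor <;> grind
      obtain ⟨a, h1, h2, h3⟩ := ha k hk
      apply hk0
      apply nd
      intro w
      rw [alt_swap B alt, ← h3]
      obtain ⟨p, q, s, r, hh⟩ := exp a
      have h4 := h1 e
      have h5 := h1 f
      rw [(all k).2, hh] at h4
      rw [(all k).1, hh] at h5
      simp [alt, hef, hee, hef', hfe, hff, hef'', hfe0, he'e, hf'e, he'f, hf'f, hf'e'] at h4 h5
      rw [hh, h4, h5]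
      simp [(all w).1, (all w).2]
    · have hr : Module.finrank (ZMod d) (LinearMap.range Φ) ≤ 2 := by
        by_contra hlt
        apply hs
        rw [← LinearMap.range_eq_top]
        apply Submodule.eq_top_of_finrank_eq
        have := Submodule.finrank_le (LinearMap.range Φ)
        simp at this ⊢
        omega
      by_cases hW : ∃ k ∈ K, ∃ p q s r : ZMod d, (∀ w, S w (p • e + q • f + s • e' + r • f')
          = p • e + q • f + s • e' + r • f') ∧ ¬ (s = 0 ∧ r = 0)
      · obtain ⟨k, hk, p, q, s, r, h, hne⟩ := hW
        have hh : ∀ w, s * nu w + r * mu w = 0 ∧ s * rho w + r * nu w = 0 := by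
          intro w
          have h1 := h w
          simp only [hlam, hmn, hrho, map_add, map_smul, map_sub, hSe, hl] at h1
          have h5 := congrArg (B f') h1
          have h6 := congrArg (B e') h1
          simp [alt, hef, hee, hef', hfe, hff, hef'', hfe0, he'e, hf'e, he'f, hf'f, hf'e'] at h5 h6
          constructor
          · linear_combination -h5
          · linear_combination -h6
        apply fin3
        by_cases hr0 : r = 0
        · have hs0 : s ≠ 0 := fun h => hne ⟨h, hr0⟩
          refine (kerdim muL).trans (Submodule.finrank_mono ?_)
          intro w hw
          have hw : mu w = 0 := hw
          have := hh w
          simp [hr0, hs0] at this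
          exact (hK w).2 (memK w (hl w) hw this.1 this.2)
        · refine (kerdim rhoL).trans (Submodule.finrank_mono ?_)
          intro w hw
          have hw : rho w = 0 := hw
          have := hh w
          simp [hw, hr0] at this
          have h8 := this.1
          simp [this.2, hr0] at h8
          exact (hK w).2 (memK w (hl w) h8 this.2 hw)
      · apply fin2 (by omega)
        have key : ∀ k ∈ K, ∃ a : V, (∀ w, β w a = B w k) ∧ (∀ y, β k y = B a y) ∧
            ∃ p q : ZMod d, a = p • e + q • f := by
          intro k hk
          obtain ⟨a, h1, h2, h3⟩ := ha k hk
          refine ⟨a, h3, h1, ?_⟩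
          obtain ⟨p, q, s, r, hh⟩ := exp a
          by_cases h0 : s = 0 ∧ r = 0
          · exact ⟨p, q, by rw [hh, h0.1, h0.2]; module⟩
          · exact absurd ⟨k, hk, p, q, s, r, by rw [← hh]; exact h2, h0⟩ hW
        intro k1 hk1 k2 hk2
        obtain ⟨a1, h1, h1', p1, q1, e1⟩ := key k1 hk1
        obtain ⟨a2, h2, h2', p2, q2, e2⟩ := key k2 hk2
        rw [← h2, h1', e1, e2]
        simp [alt, hef, hfe0]

end linalg

section ops
variable {d : ℕ} [NeZero d] [Fact d.Prime]

theorem om_prim : IsPrimitiveRoot (omega d) d :=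
  Complex.isPrimitiveRoot_exp d (NeZero.ne d)

theorem om_zero : omegaPow d 0 = 1 := by simp [omegaPow]

theorem om_add (a b : ZMod d) : omegaPow d (a + b) = omegaPow d a * omegaPow d b := by
  unfold omegaPow
  rw [← pow_add, ZMod.val_add, ← pow_mod_orderOf, ← pow_mod_orderOf _ (a.val + b.val),
    ← om_prim.eq_orderOf, Nat.mod_mod]

theorem om_inj {a b : ZMod d} (h : omegaPow d a = omegaPow d b) : a = b := by
  apply ZMod.val_injective
  exact om_prim.pow_inj (ZMod.val_lt a) (ZMod.val_lt b) h

theorem om_ne (a : ZMod d) : omegaPow d a ≠ 0 :=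
  pow_ne_zero _ (om_prim.ne_zero (NeZero.ne d))

theorem om_neg (a : ZMod d) : omegaPow d (-a) = (omegaPow d a)⁻¹ := by
  apply eq_inv_of_mul_eq_one_left
  rw [← om_add, neg_add_cancel, om_zero]

theorem om_star (a : ZMod d) : star (omegaPow d a) = omegaPow d (-a) := by
  rw [om_neg]
  have h : ‖omegaPow d a‖ = 1 := by
    unfold omegaPow
    rw [norm_pow, om_prim.norm'_eq_one (NeZero.ne d), one_pow]
  rw [Complex.inv_def, Complex.normSq_eq_norm_sq, h]
  simp

theorem om_surj (z : ℂ) (hz : z ^ d = 1) : ∃ c : ZMod d, z = omegaPow d c := by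
  obtain ⟨i, hi, h⟩ := om_prim.eq_pow_of_pow_eq_one hz
  refine ⟨(i : ZMod d), ?_⟩
  rw [omegaPow, ZMod.val_natCast, Nat.mod_eq_of_lt hi, h]

def BB (d : ℕ) : VV d →ₗ[ZMod d] VV d →ₗ[ZMod d] ZMod d :=
  LinearMap.mk₂ (ZMod d) (fun v w => v.1 ⬝ᵥ w.2 - w.1 ⬝ᵥ v.2)
    (by intros; simp [add_dotProduct, dotProduct_add]; ring)
    (by intros; simp [mul_sub])
    (by intros; simp [add_dotProduct, dotProduct_add]; ring)
    (by intros; simp [mul_sub])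

theorem BB_apply (v w : VV d) : BB d v w = v.1 ⬝ᵥ w.2 - w.1 ⬝ᵥ v.2 := rfl

theorem BB_alt (v : VV d) : BB d v v = 0 := by simp [BB_apply]

theorem BB_nd (v : VV d) (h : ∀ w, BB d v w = 0) : v = 0 := by
  ext i
  · simpa [BB_apply] using h (0, Pi.single i 1)
  · simpa [BB_apply] using h (Pi.single i 1, 0)

def TT (v : VV d) : Mat d 2 :=
  omegaPow d (-((2 : ZMod d)⁻¹ * (v.1 ⬝ᵥ v.2))) • (ZP d 2 v.1 * XQ d 2 v.2)

theorem TT_apply (v : VV d) (i j) : TT v i j =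
    if i = j + v.2 then omegaPow d (v.1 ⬝ᵥ i - (2 : ZMod d)⁻¹ * (v.1 ⬝ᵥ v.2)) else 0 := by
  unfold TT ZP XQ
  rw [Matrix.smul_apply, Matrix.diagonal_mul]
  simp only [Matrix.of_apply]
  split_ifs
  · rw [sub_eq_add_neg, om_add]; simp [mul_comm]
  · simp

theorem TT_mul (h2 : (2 : ZMod d) ≠ 0) (v w : VV d) :
    TT v * TT w = omegaPow d ((2 : ZMod d)⁻¹ * BB d v w) • TT (v + w) := by
  ext i j
  rw [Matrix.mul_apply, Matrix.smul_apply, TT_apply, Finset.sum_eq_single (j + w.2)]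
  · rw [TT_apply, TT_apply]
    by_cases h : i = j + w.2 + v.2
    · rw [if_pos h, if_pos rfl, if_pos (by rw [h]; simp; abel), ← om_add, smul_eq_mul, ← om_add]
      congr 1
      subst h
      simp only [BB_apply, dotProduct_add, add_dotProduct, Prod.fst_add, Prod.snd_add]
      field_simp
      ring
    · have h' : ¬ i = j + (v + w).2 := by
        intro h'; apply h; rw [h', Prod.snd_add]; abel
      rw [if_neg h, if_neg h', zero_mul, smul_zero]
  · intro b _ hb
    rw [TT_apply w, if_neg hb, mul_zero]
  · simp

theorem TT_zero : TT (0 : VV d) = 1 := by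
  ext i j
  rw [TT_apply, Matrix.one_apply]
  simp [om_zero]

theorem TT_conj (h2 : (2 : ZMod d) ≠ 0) (v : VV d) : (TT v)ᴴ = TT (-v) := by
  ext i j
  rw [Matrix.conjTranspose_apply, TT_apply, TT_apply]
  by_cases h : j = i + v.2
  · rw [if_pos h, if_pos (by rw [h]; simp), om_star]
    congr 1
    subst h
    simp
    field_simp
    ring
  · rw [if_neg h, if_neg (by intro h'; apply h; rw [h']; simp)]
    simp

theorem TT_mul_neg (h2 : (2 : ZMod d) ≠ 0) (v : VV d) : TT v * TT (-v) = 1 := by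
  rw [TT_mul h2]; simp [BB_alt, om_zero, TT_zero]

theorem TT_neg_mul (h2 : (2 : ZMod d) ≠ 0) (v : VV d) : TT (-v) * TT v = 1 := by
  rw [TT_mul h2]; simp [BB_alt, om_zero, TT_zero]

theorem TT_add (h2 : (2 : ZMod d) ≠ 0) (v w : VV d) :
    TT (v + w) = omegaPow d (-((2 : ZMod d)⁻¹ * BB d v w)) • (TT v * TT w) := by
  rw [TT_mul h2, smul_smul, ← om_add, neg_add_cancel, om_zero, one_smul]

theorem TT_comm (h2 : (2 : ZMod d) ≠ 0) (v w : VV d) :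
    TT v * TT w = omegaPow d (BB d v w) • (TT w * TT v) := by
  rw [TT_mul h2, TT_mul h2, smul_smul, ← om_add, add_comm w v]
  congr 2
  rw [alt_swap (BB d) BB_alt w v]
  field_simp
  ring

theorem TT_pow (h2 : (2 : ZMod d) ≠ 0) (v : VV d) (n : ℕ) : TT v ^ n = TT (n • v) := by
  induction n with
  | zero => simp [TT_zero]
  | succ n ih => rw [pow_succ, ih, TT_mul h2, map_nsmul]; simp [BB_alt, om_zero, add_smul]

theorem TT_trace (h2 : (2 : ZMod d) ≠ 0) (v : VV d) (hv : v ≠ 0) : (TT v).trace = 0 := by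
  have : ∃ w, BB d v w ≠ 0 := by
    by_contra! h
    exact hv (BB_nd v h)
  obtain ⟨w, hw⟩ := this
  have h := TT_comm h2 v w
  have h3 : TT v = omegaPow d (BB d v w) • (TT w * TT v * TT (-w)) := by
    rw [← Matrix.smul_mul, ← h, Matrix.mul_assoc, TT_mul_neg h2, Matrix.mul_one]
  have h4 := congrArg Matrix.trace h3
  rw [Matrix.trace_smul, Matrix.trace_mul_comm, ← Matrix.mul_assoc, TT_neg_mul h2, Matrix.one_mul,
    smul_eq_mul] at h4
  by_contra hne
  apply hw
  apply om_inj
  rw [om_zero]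
  apply mul_right_cancel₀ hne
  rw [← h4, one_mul]

theorem TT_inj (h2 : (2 : ZMod d) ≠ 0) {c c' : ZMod d} {v w : VV d}
    (h : omegaPow d c • TT v = omegaPow d c' • TT w) : c = c' ∧ v = w := by
  have hv : v = w := by
    by_contra hne
    have h3 := congrArg (fun M => (M * TT (-w)).trace) h
    simp only [Matrix.smul_mul, TT_mul_neg h2] at h3
    rw [TT_mul h2, ← sub_eq_add_neg, Matrix.trace_smul, Matrix.trace_smul, Matrix.trace_smul,
      TT_trace h2 _ (sub_ne_zero.2 hne)] at h3
    simp [om_ne, NeZero.ne] at h3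
  subst hv
  refine ⟨?_, rfl⟩
  have h3 := congrArg (fun M => (M * TT (-v)) 0 0) h
  simp only [Matrix.smul_mul, TT_mul_neg h2] at h3
  simp at h3
  exact om_inj h3

theorem comm_diag (M : Mat d 2) (h : ∀ p, M * TT (p, 0) = TT (p, 0) * M) : M.IsDiag := by
  have hT : ∀ p : Fin 2 → ZMod d, TT (p, 0) = Matrix.diagonal fun z => omegaPow d (p ⬝ᵥ z) := by
    intro p
    ext i j
    rw [TT_apply, Matrix.diagonal_apply]
    simp
  intro i j hij
  obtain ⟨k, hk⟩ := Function.ne_iff.1 hij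
  have h1 := congrFun (congrFun (h (Pi.single k 1)) i) j
  rw [hT, Matrix.mul_diagonal, Matrix.diagonal_mul] at h1
  by_contra hne
  apply hk
  rw [mul_comm] at h1
  have := om_inj (mul_right_cancel₀ hne h1)
  simpa using this.symm

theorem comm_scalar (M : Mat d 2) (h : ∀ v, M * TT v = TT v * M) :
    M = M 0 0 • 1 := by
  have hd := comm_diag M (fun p => h _)
  ext i j
  by_cases hij : i = j
  · subst hij
    have h1 := congrFun (congrFun (h (0, i)) i) 0
    rw [Matrix.mul_apply, Matrix.mul_apply, Finset.sum_eq_single i, Finset.sum_eq_single 0] at h1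
    · simp [TT_apply, om_zero] at h1
      simp [h1]
    · intro b _ hb
      rw [hd hb, mul_zero]
    · simp
    · intro b _ hb
      rw [hd hb.symm, zero_mul]
    · simp
  · rw [hd hij]; simp [hij]

theorem mem_Pauli (M : Mat d 2) : M ∈ Pauli d 2 ↔ ∃ c v, M = omegaPow d c • TT v := by
  constructor
  · rintro ⟨c, p, q, rfl⟩
    refine ⟨c + (2 : ZMod d)⁻¹ * (p ⬝ᵥ q), (p, q), ?_⟩
    rw [TT, smul_smul, ← om_add]
    simp
  · rintro ⟨c, v, rfl⟩
    refine ⟨c + -((2 : ZMod d)⁻¹ * (v.1 ⬝ᵥ v.2)), v.1, v.2, ?_⟩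
    rw [TT, smul_smul, ← om_add]

theorem uni_iff (M : Mat d 2) : M ∈ Matrix.unitaryGroup (Fin 2 → ZMod d) ℂ ↔ M * Mᴴ = 1 := by
  rw [Matrix.mem_unitaryGroup_iff, Matrix.star_eq_conjTranspose]

theorem cliff_lift (h2 : (2 : ZMod d) ≠ 0) (C : Mat d 2) (hC : C ∈ Clifford d 2) :
    ∃ (S : VV d →ₗ[ZMod d] VV d) (β : VV d →ₗ[ZMod d] ZMod d),
      (∀ w, C * TT w * Cᴴ = omegaPow d (β w) • TT (S w)) ∧
      ∀ x y, BB d (S x) (S y) = BB d x y := by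
  obtain ⟨hu, hC⟩ := hC
  rw [uni_iff] at hu
  have hu' : Cᴴ * C = 1 := mul_eq_one_comm.1 hu
  have H : ∀ w : VV d, ∃ c v, C * TT w * Cᴴ = omegaPow d c • TT v := by
    intro w
    rw [← mem_Pauli]
    apply hC
    rw [mem_Pauli]
    exact ⟨0, w, by rw [om_zero, one_smul]⟩
  choose β S hS using H
  have hadd : ∀ v w, β (v + w) = -((2 : ZMod d)⁻¹ * BB d v w) + β v + β w
      + (2 : ZMod d)⁻¹ * BB d (S v) (S w) ∧ S (v + w) = S v + S w := by
    intro v w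
    apply TT_inj h2
    rw [← hS, TT_add h2]
    have : C * (TT v * TT w) * Cᴴ = (C * TT v * Cᴴ) * (C * TT w * Cᴴ) := by
      simp only [Matrix.mul_assoc]
      rw [← Matrix.mul_assoc Cᴴ C, hu', Matrix.one_mul]
    rw [Matrix.mul_smul, Matrix.smul_mul, this, hS, hS, Matrix.smul_mul, Matrix.mul_smul,
      TT_mul h2, smul_smul, smul_smul, smul_smul, om_add, om_add, om_add]
  have hB : ∀ v w, BB d (S v) (S w) = BB d v w := by
    intro v w
    have h3 := (hadd v w).1
    have h4 := (hadd w v).1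
    rw [add_comm w v, h3, alt_swap (BB d) BB_alt w v, alt_swap (BB d) BB_alt (S w) (S v)] at h4
    field_simp at h4
    have : 2 * (BB d (S v) (S w) - BB d v w) = 0 := by linear_combination h4
    simpa [h2, sub_eq_zero] using this
  refine ⟨(AddMonoidHom.mk' S fun v w => (hadd v w).2).toZModLinearMap d,
    (AddMonoidHom.mk' β fun v w => ?_).toZModLinearMap d, hS, hB⟩
  rw [(hadd v w).1, hB]; ring

open scoped ComplexOrder in
theorem intertwine (h2 : (2 : ZMod d) ≠ 0) (g : VV d →ₗ[ZMod d] VV d)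
    (hg : ∀ x y, BB d (g x) (g y) = BB d x y) (l : VV d →ₗ[ZMod d] ZMod d) :
    ∃ U : Mat d 2, U ∈ Clifford d 2 ∧ Uᴴ ∈ Clifford d 2 ∧
      ∀ v, U * TT v * Uᴴ = omegaPow d (l v) • TT (g v) := by
  let R : VV d → Mat d 2 := fun v => omegaPow d (l v) • TT (g v)
  have Rmul : ∀ v w, R v * R w = omegaPow d ((2 : ZMod d)⁻¹ * BB d v w) • R (v + w) := by
    intro v w
    simp only [R, Matrix.smul_mul, Matrix.mul_smul, TT_mul h2, smul_smul, hg, map_add, om_add]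
    congr 1
    ring
  have R0 : R 0 = 1 := by simp [R, om_zero, TT_zero]
  have Rinv : ∀ v, R (-v) * R v = 1 := by
    intro v
    rw [Rmul]; simp [BB_alt, om_zero, R0]
  have Rconj : ∀ v, (R v)ᴴ = R (-v) := by
    intro v
    simp only [R, Matrix.conjTranspose_smul, om_star, TT_conj h2, map_neg]
  let M : Mat d 2 → Mat d 2 := fun A => ∑ v, R v * A * TT (-v)
  have hM1 : ∀ A w, R w * M A * TT (-w) = M A := by
    intro A w
    simp only [M]
    rw [Matrix.mul_sum, Matrix.sum_mul]
    refine Fintype.sum_equiv (Equiv.addLeft w) _ _ ?_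
    intro v
    have : R w * (R v * A * TT (-v)) * TT (-w) = (R w * R v) * A * (TT (-v) * TT (-w)) := by
      simp only [Matrix.mul_assoc]
    rw [this, Rmul, TT_mul h2, Matrix.smul_mul, Matrix.smul_mul, Matrix.mul_smul, smul_smul,
      ← om_add, alt_swap (BB d) BB_alt w v]
    simp [om_zero, add_comm]
  have hM2 : ∀ A w, R w * M A = M A * TT w := by
    intro A w
    conv_rhs => rw [← hM1 A w]
    rw [Matrix.mul_assoc, Matrix.mul_assoc, TT_neg_mul h2, Matrix.mul_one]
  have hM3 : ∃ A, M A ≠ 0 := by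
    by_contra! h
    have h3 : ∑ k, (M (Matrix.single 0 k 1)) 0 k = 0 := by simp [h]
    have h4 : ∑ k, (M (Matrix.single 0 k 1)) 0 k = ∑ v, R v 0 0 * (TT (-v)).trace := by
      simp only [M, Matrix.sum_apply]
      rw [Finset.sum_comm]
      refine Finset.sum_congr rfl fun v _ => ?_
      rw [Matrix.trace, Finset.mul_sum]
      refine Finset.sum_congr rfl fun k _ => ?_
      rw [Matrix.mul_assoc, Matrix.mul_apply, Finset.sum_eq_single 0]
      · simp [Matrix.single_mul_apply_same]
      · intro b _ hb
        rw [Matrix.single_mul_apply_of_ne _ _ _ _ _ hb, mul_zero]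
      · simp
    rw [h4, Finset.sum_eq_single 0] at h3
    · simp [R0, TT_zero, NeZero.ne] at h3
    · intro v _ hv
      rw [TT_trace h2 _ (neg_ne_zero.2 hv), mul_zero]
    · simp
  obtain ⟨A, hA⟩ := hM3
  set N := M A with hN
  have hM2 : ∀ w, R w * N = N * TT w := hM2 A
  have hM4 : ∀ w, Nᴴ * R w = TT w * Nᴴ := by
    intro w
    have := congrArg Matrix.conjTranspose (hM2 (-w))
    rwa [Matrix.conjTranspose_mul, Matrix.conjTranspose_mul, Rconj, TT_conj h2, neg_neg] at this
  have hsc := comm_scalar (Nᴴ * N) (by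
    intro v
    rw [Matrix.mul_assoc, ← hM2, ← Matrix.mul_assoc, hM4, Matrix.mul_assoc])
  set z := (Nᴴ * N) 0 0 with hz
  have hz0 : z ≠ 0 := by
    intro h
    rw [h, zero_smul] at hsc
    exact hA (Matrix.conjTranspose_mul_self_eq_zero.1 hsc)
  have hzr : ∃ r : ℝ, 0 < r ∧ z = r := by
    refine ⟨∑ k, ‖N k 0‖ ^ 2, ?_, ?_⟩
    · refine lt_of_le_of_ne (by positivity) ?_
      intro h
      apply hz0
      rw [hz, Matrix.mul_apply]
      have h' := (Finset.sum_eq_zero_iff_of_nonneg (fun k _ => by positivity)).1 h.symm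
      refine Finset.sum_eq_zero fun k hk => ?_
      have := h' k hk
      have : N k 0 = 0 := by simpa using this
      rw [this, mul_zero]
    · rw [hz, Matrix.mul_apply]
      push_cast
      refine Finset.sum_congr rfl fun k _ => ?_
      rw [Matrix.conjTranspose_apply, ← Complex.conj_mul']
      rfl
  obtain ⟨r, hr, hzr⟩ := hzr
  let s : ℂ := ((Real.sqrt r)⁻¹ : ℝ)
  have hss : star s * s * z = 1 := by
    have : star s = s := Complex.conj_ofReal _
    rw [this, hzr]
    simp only [s]
    rw [← Complex.ofReal_mul, ← Complex.ofReal_mul]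
    rw [← mul_inv, Real.mul_self_sqrt hr.le, inv_mul_cancel₀ hr.ne']
    simp
  let U : Mat d 2 := s • N
  have hU' : Uᴴ * U = 1 := by
    simp only [U]
    rw [Matrix.conjTranspose_smul, Matrix.smul_mul, Matrix.mul_smul, hsc, smul_smul, smul_smul,
      hss, one_smul]
  have hU : U * Uᴴ = 1 := mul_eq_one_comm.1 hU'
  have hUR : ∀ v, U * TT v * Uᴴ = omegaPow d (l v) • TT (g v) := by
    intro v
    have : U * TT v = R v * U := by
      simp only [U]
      rw [Matrix.smul_mul, ← hM2, Matrix.mul_smul]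
    rw [this, Matrix.mul_assoc, hU, Matrix.mul_one]
  clear_value U
  refine ⟨U, ⟨(uni_iff U).2 hU, ?_⟩, ⟨(uni_iff _).2 (by rw [Matrix.conjTranspose_conjTranspose, hU']), ?_⟩, hUR⟩
  · intro P hP
    obtain ⟨c, v, rfl⟩ := (mem_Pauli P).1 hP
    rw [mem_Pauli, Matrix.mul_smul, Matrix.smul_mul, hUR, smul_smul, ← om_add]
    exact ⟨_, _, rfl⟩
  · have ginj : Function.Injective g := by
      rw [← LinearMap.ker_eq_bot, LinearMap.ker_eq_bot']
      intro m hm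
      apply BB_nd
      intro w
      rw [← hg, hm]; simp
    have gsurj := LinearMap.injective_iff_surjective.1 ginj
    intro P hP
    obtain ⟨c, v, rfl⟩ := (mem_Pauli P).1 hP
    obtain ⟨w, rfl⟩ := gsurj v
    rw [mem_Pauli]
    refine ⟨c + - l w, w, ?_⟩
    have h3 : TT (g w) = omegaPow d (- l w) • (U * TT w * Uᴴ) := by
      rw [hUR, smul_smul, ← om_add, neg_add_cancel, om_zero, one_smul]
    have h4 : Uᴴ * (U * TT w * Uᴴ) * U = TT w := by
      rw [Matrix.mul_assoc, Matrix.mul_assoc, hU', Matrix.mul_one, ← Matrix.mul_assoc, hU',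
        Matrix.one_mul]
    rw [h3, smul_smul, ← om_add, Matrix.conjTranspose_conjTranspose, Matrix.mul_smul,
      Matrix.smul_mul, h4]

theorem cliff_mul {C D : Mat d 2} (hC : C ∈ Clifford d 2) (hD : D ∈ Clifford d 2) :
    C * D ∈ Clifford d 2 := by
  refine ⟨mul_mem hC.1 hD.1, fun P hP => ?_⟩
  have := hC.2 _ (hD.2 P hP)
  rw [Matrix.conjTranspose_mul]
  simpa only [Matrix.mul_assoc] using this

theorem TT_smul (h2 : (2 : ZMod d) ≠ 0) (x : ZMod d) (v : VV d) : TT (x • v) = TT v ^ x.val := by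
  rw [TT_pow h2, ← Nat.cast_smul_eq_nsmul (ZMod d), ZMod.natCast_zmod_val]

theorem om_pow (c : ZMod d) (n : ℕ) : omegaPow d c ^ n = omegaPow d (n * c) := by
  induction n with
  | zero => simp [om_zero]
  | succ n ih => rw [pow_succ, ih, ← om_add]; congr 1; push_cast; ring

theorem gmap_symp (k1 k2 l1 l2 : VV d) (hk : BB d k1 k2 = 0) (h11 : BB d k1 l1 = 1)
    (h12 : BB d k1 l2 = 0) (h21 : BB d k2 l1 = 0) (h22 : BB d k2 l2 = 1) (hl : BB d l1 l2 = 0)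
    (x y : VV d) : BB d (gmap k1 k2 l1 l2 x) (gmap k1 k2 l1 l2 y) = BB d x y := by
  change BB d (x.1 0 • k1 + x.1 1 • k2 + x.2 0 • l1 + x.2 1 • l2)
    (y.1 0 • k1 + y.1 1 • k2 + y.2 0 • l1 + y.2 1 • l2) = _
  have alt := BB_alt (d := d)
  simp only [map_add, map_smul, LinearMap.add_apply, LinearMap.smul_apply, smul_eq_mul,
    alt, hk, h11, h12, h21, h22, hl, alt_swap (BB d) alt k2 k1, alt_swap (BB d) alt l1 k1,
      alt_swap (BB d) alt l2 k1, alt_swap (BB d) alt l1 k2, alt_swap (BB d) alt l2 k2,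
      alt_swap (BB d) alt l2 l1]
  simp only [BB_apply, dotProduct, Fin.sum_univ_two]
  ring

theorem BB_rep (f : VV d →ₗ[ZMod d] ZMod d) : ∃ a, ∀ y, f y = BB d a y := by
  have inj : Function.Injective (BB d) := by
    rw [← LinearMap.ker_eq_bot, LinearMap.ker_eq_bot']
    intro m hm
    apply BB_nd
    intro w
    rw [hm]; rfl
  have surj := (LinearMap.injective_iff_surjective_of_finrank_eq_finrank (f := BB d)
    (Subspace.dual_finrank_eq (K := ZMod d) (V := VV d)).symm).1 inj
  obtain ⟨a, ha⟩ := surj f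
  exact ⟨a, fun y => by rw [ha]⟩

theorem semi_main (h2 : (2 : ZMod d) ≠ 0) (G : Mat d 2) (hG : G ∈ Third d 2) :
    ∃ C₁ ∈ Clifford d 2, ∃ C₂ ∈ Clifford d 2, ∃ D ∈ Third d 2, D.IsDiag ∧ G = C₁ * D * C₂ := by
  obtain ⟨hGu, hG⟩ := hG
  have hu := (uni_iff G).1 hGu
  have hu' : Gᴴ * G = 1 := mul_eq_one_comm.1 hu
  obtain ⟨C, hCdef⟩ : ∃ C : VV d → Mat d 2, ∀ v, C v = G * TT v * Gᴴ := ⟨_, fun _ => rfl⟩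
  have hC : ∀ v, C v ∈ Clifford d 2 := by
    intro v
    rw [hCdef]
    apply hG
    rw [mem_Pauli]
    exact ⟨0, v, by rw [om_zero, one_smul]⟩
  have hmul : ∀ A A' : Mat d 2, G * (A * A') * Gᴴ = (G * A * Gᴴ) * (G * A' * Gᴴ) := by
    intro A A'
    simp only [Matrix.mul_assoc]
    rw [← Matrix.mul_assoc Gᴴ G, hu', Matrix.one_mul]
  have C0 : C 0 = 1 := by rw [hCdef, TT_zero, Matrix.mul_one, hu]
  have Cu : ∀ v, C v * (C v)ᴴ = 1 := fun v => (uni_iff _).1 (hC v).1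
  have Cu' : ∀ v, (C v)ᴴ * C v = 1 := fun v => mul_eq_one_comm.1 (Cu v)
  have Cadd : ∀ v w, C (v + w) = omegaPow d (-((2 : ZMod d)⁻¹ * BB d v w)) • (C v * C w) := by
    intro v w
    rw [hCdef, TT_add h2, Matrix.mul_smul, Matrix.smul_mul, hmul, hCdef, hCdef]
  have Ccomm : ∀ v w, C v * C w = omegaPow d (BB d v w) • (C w * C v) := by
    intro v w
    rw [hCdef, hCdef, ← hmul, TT_comm h2, Matrix.mul_smul, Matrix.smul_mul, hmul]
  have Cpow : ∀ v (n : ℕ), C v ^ n = C (n • v) := by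
    intro v n
    induction n with
    | zero => simp [C0]
    | succ n ih => rw [pow_succ, ih, add_smul, one_smul, Cadd, map_nsmul]; simp [BB_alt, om_zero]
  choose S β hS hSB using fun v => cliff_lift h2 (C v) (hC v)
  have S0 : ∀ x, S 0 x = x := by
    intro x
    have h := hS 0 x
    rw [C0, Matrix.conjTranspose_one, Matrix.one_mul, Matrix.mul_one, ← one_smul ℂ (TT x),
      ← om_zero (d := d)] at h
    exact (TT_inj h2 h).2.symm
  have Sadd' : ∀ v w x, β (v + w) x = β w x + β v (S w x) ∧ S (v + w) x = S v (S w x) := by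
    intro v w x
    apply TT_inj h2
    rw [← hS, Cadd, Matrix.conjTranspose_smul, om_star, Matrix.conjTranspose_mul, Matrix.smul_mul,
      Matrix.smul_mul, Matrix.mul_smul, smul_smul, ← om_add]
    have : C v * C w * TT x * ((C w)ᴴ * (C v)ᴴ) = C v * (C w * TT x * (C w)ᴴ) * (C v)ᴴ := by
      simp only [Matrix.mul_assoc]
    rw [this, hS, Matrix.mul_smul, Matrix.smul_mul, hS, smul_smul, smul_smul, om_add (β w x)]
    simp [om_zero]
  have hKa : ∀ v, (∀ x, S v x = x) → ∃ a c, C v = omegaPow d c • TT a ∧ (∀ y, β v y = BB d a y) ∧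
      (∀ w, S w a = a) ∧ ∀ w, β w a = BB d w v := by
    intro v hv
    obtain ⟨a, ha⟩ := BB_rep (β v)
    have h1 : ∀ y, C v * TT y = omegaPow d (BB d a y) • (TT y * C v) := by
      intro y
      have := hS v y
      rw [hv, ha] at this
      rw [← Matrix.smul_mul, ← this, Matrix.mul_assoc _ (C v)ᴴ, Cu', Matrix.mul_one]
    have h3 := comm_scalar (TT (-a) * C v) (by
      intro y
      rw [Matrix.mul_assoc, h1, Matrix.mul_smul, ← Matrix.mul_assoc, TT_comm h2, Matrix.smul_mul,
        smul_smul, ← om_add, Matrix.mul_assoc]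
      simp [om_zero])
    set z := (TT (-a) * C v) 0 0 with hz
    have h4 : C v = z • TT a := by
      have := congrArg (fun M => TT a * M) h3
      simpa only [← Matrix.mul_assoc, TT_mul_neg h2, Matrix.one_mul, Matrix.mul_smul,
        Matrix.mul_one] using this
    have hd0 : ∀ u : VV d, d • u = 0 := by
      intro u
      rw [← Nat.cast_smul_eq_nsmul (ZMod d)]; simp
    have h5 : z ^ d = 1 := by
      have := Cpow v d
      rw [h4, smul_pow, TT_pow h2, hd0, hd0, C0, TT_zero] at this
      have := congrFun (congrFun this 0) 0
      simpa using this
    obtain ⟨c, hc⟩ := om_surj z h5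
    rw [hc] at h4
    have h6 : ∀ w, c + β w a = BB d w v + c ∧ S w a = a := by
      intro w
      apply TT_inj h2
      have h7 := Ccomm w v
      have h8 := congrArg (fun M => M * (C w)ᴴ) h7
      simp only [Matrix.smul_mul] at h8
      rw [Matrix.mul_assoc (C v), Cu, Matrix.mul_one, h4, Matrix.mul_smul, Matrix.smul_mul, hS,
        smul_smul, smul_smul, ← om_add, ← om_add] at h8
      exact h8
    exact ⟨a, c, h4, ha, fun w => (h6 w).2, fun w => by linear_combination (h6 w).1⟩
  obtain ⟨k1, k2, kind, kiso, hk1, hk2⟩ := linalg_main (BB d) (by simp) h2 BB_alt BB_nd S S0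
    (fun v w x => (Sadd' v w x).2) hSB β (fun v w x => (Sadd' v w x).1)
    (fun v hv => by
      obtain ⟨a, c, h1, h3⟩ := hKa v hv
      exact ⟨a, h3⟩)
  obtain ⟨a1, c1, hC1, hb1, hs1, hw1⟩ := hKa k1 hk1
  obtain ⟨a2, c2, hC2, hb2, hs2, hw2⟩ := hKa k2 hk2
  have aiso : BB d a1 a2 = 0 := by rw [← hb1, hw2, kiso]
  have aind : ∀ x y : ZMod d, x • a1 + y • a2 = 0 → x = 0 ∧ y = 0 := by
    intro x y h
    apply kind
    apply BB_nd
    intro w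
    rw [alt_swap (BB d) BB_alt, map_add, map_smul, map_smul, ← hw1, ← hw2, ← map_smul, ← map_smul,
      ← map_add, h, map_zero, neg_zero]
  obtain ⟨l1, l2, q1, q2, q3, q4, q5⟩ := complement (BB d) BB_alt BB_nd k1 k2 kiso kind
  obtain ⟨b1, b2, r1, r2, r3, r4, r5⟩ := complement (BB d) BB_alt BB_nd a1 a2 aiso aind
  obtain ⟨U, hU, hUc, hUT⟩ := intertwine h2 (gmap k1 k2 l1 l2)
    (gmap_symp _ _ _ _ kiso q1 q2 q3 q4 q5) 0
  let l : VV d →ₗ[ZMod d] ZMod d :=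
    { toFun := fun v => v.1 0 * c1 + v.1 1 * c2
      map_add' := by intros; simp; ring
      map_smul' := by intros; simp; ring }
  obtain ⟨W, hW, hWc, hWT⟩ := intertwine h2 (gmap a1 a2 b1 b2)
    (gmap_symp _ _ _ _ aiso r1 r2 r3 r4 r5) l
  have Uu := (uni_iff U).1 hU.1
  have Uu' : Uᴴ * U = 1 := mul_eq_one_comm.1 Uu
  have Wu := (uni_iff W).1 hW.1
  have Wu' : Wᴴ * W = 1 := mul_eq_one_comm.1 Wu
  have hconj : ∀ x y : ZMod d, C (x • k1 + y • k2)
      = omegaPow d (x * c1 + y * c2) • TT (x • a1 + y • a2) := by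
    intro x y
    have hsm : ∀ (x : ZMod d) k, C (x • k) = C k ^ x.val := by
      intro x k
      rw [Cpow, ← Nat.cast_smul_eq_nsmul (ZMod d), ZMod.natCast_zmod_val]
    rw [Cadd, hsm, hsm, hC1, hC2, smul_pow, smul_pow, om_pow, om_pow, TT_add h2, TT_smul h2,
      TT_smul h2]
    simp only [map_smul, LinearMap.smul_apply, kiso, aiso, ZMod.natCast_zmod_val, om_add,
      Matrix.smul_mul, Matrix.mul_smul, smul_smul]
    simp [om_zero, mul_comm]
  have hfin : ∀ p : Fin 2 → ZMod d, G * (U * TT (p, 0) * Uᴴ) * Gᴴ = W * TT (p, 0) * Wᴴ := by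
    intro p
    rw [hUT, hWT]
    have e1 : gmap k1 k2 l1 l2 (p, 0) = p 0 • k1 + p 1 • k2 := by simp [gmap]
    have e2 : gmap a1 a2 b1 b2 (p, 0) = p 0 • a1 + p 1 • a2 := by simp [gmap]
    rw [e1, e2]
    simp only [LinearMap.zero_apply, om_zero, one_smul]
    rw [← hCdef, hconj]
    rfl
  refine ⟨W, hW, Uᴴ, hUc, Wᴴ * G * U, ⟨mul_mem (mul_mem hWc.1 hGu) hU.1, ?_⟩, ?_, ?_⟩
  · intro P hP
    have h3 := hG _ (hU.2 P hP)
    have h4 := cliff_mul (cliff_mul hWc h3) hW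
    simpa only [Matrix.conjTranspose_mul, Matrix.conjTranspose_conjTranspose, Matrix.mul_assoc]
      using h4
  · apply comm_diag
    intro p
    have h3 := congrArg (fun M => Wᴴ * M * (G * U)) (hfin p)
    have h4 : Wᴴ * (G * (U * TT (p, 0) * Uᴴ) * Gᴴ) * (G * U)
        = Wᴴ * G * U * TT (p, 0) * (Uᴴ * ((Gᴴ * G) * U)) := by simp only [Matrix.mul_assoc]
    have h5 : Wᴴ * (W * TT (p, 0) * Wᴴ) * (G * U)
        = (Wᴴ * W) * TT (p, 0) * (Wᴴ * G * U) := by simp only [Matrix.mul_assoc]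
    simp only [h4, h5, hu', Uu', Wu', Matrix.one_mul, Matrix.mul_one] at h3
    exact h3
  · have : W * (Wᴴ * G * U) * Uᴴ = (W * Wᴴ) * G * (U * Uᴴ) := by simp only [Matrix.mul_assoc]
    rw [this, Wu, Uu, Matrix.one_mul, Matrix.mul_one]

end ops

/-- **Main theorem.** For every odd prime `d`, every two-qudit gate of the third level
of the Clifford hierarchy is semi-Clifford. -/
theorem stmt0 (d : ℕ) [NeZero d] (hp : Nat.Prime d) (hodd : Odd d)
    (G : Mat d 2) (hG : G ∈ Third d 2) :
    ∃ C₁ ∈ Clifford d 2, ∃ C₂ ∈ Clifford d 2, ∃ D ∈ Third d 2, D.IsDiag ∧ G = C₁ * D * C₂ := by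
  haveI : Fact d.Prime := ⟨hp⟩
  have h2 : (2 : ZMod d) ≠ 0 := by
    intro h
    have h' : ((2 : ℕ) : ZMod d) = 0 := by exact_mod_cast h
    rw [ZMod.natCast_eq_zero_iff] at h'
    have := (Nat.prime_dvd_prime_iff_eq hp Nat.prime_two).1 h'
    subst this
    exact absurd hodd (by decide)
  exact semi_main h2 G hG

end
end

section
/- Let d be an odd prime and let G ∈ C_3^2 be a simplified two-qudit third-level gate. Then there exists a Clifford gate C ∈ C_2^2 such that GC is again a simplified two-qudit third-level gate and (GC) Z₁ (GC)* is a Pauli gate (equivalently, in the expression (GC)Z₁(GC)* = D_{Φ'₁}P'₁ with P'₁ Pauli, one may take Φ'₁ to be the zero matrix). -/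
open Matrix

noncomputable section

theorem omegaPow_eq (d : ℕ) [NeZero d] (c : ZMod d) : omegaPow d c = ZMod.stdAddChar c := by
  have h := ZMod.stdAddChar_coe (N := d) (c.val : ℤ)
  have h2 : (((c.val : ℤ)) : ZMod d) = c := by simp
  rw [h2] at h
  rw [h, omegaPow, omega, ← Complex.exp_nat_mul]
  congr 1
  push_cast
  ring

theorem oP_add (d : ℕ) [NeZero d] (a b : ZMod d) :
    omegaPow d (a + b) = omegaPow d a * omegaPow d b := by
  simp only [omegaPow_eq, AddChar.map_add_eq_mul]

theorem oP_zero (d : ℕ) [NeZero d] : omegaPow d 0 = 1 := by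
  simp only [omegaPow_eq, AddChar.map_zero_eq_one]

theorem oP_star (d : ℕ) [NeZero d] (a : ZMod d) : star (omegaPow d a) = omegaPow d (-a) := by
  simp only [omegaPow_eq, AddChar.map_neg_eq_conj]
  rfl

theorem oP_sum (d : ℕ) [NeZero d] (n : ℕ) (a : Fin n → ZMod d) :
    ∑ z : Fin n → ZMod d, omegaPow d (a ⬝ᵥ z) = if a = 0 then (d : ℂ) ^ n else 0 := by
  split_ifs with h
  · subst h
    simp [oP_zero, ZMod.card]
  · let ψ : AddChar (Fin n → ZMod d) ℂ :=
      { toFun := fun z => omegaPow d (a ⬝ᵥ z)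
        map_zero_eq_one' := by simp [oP_zero]
        map_add_eq_mul' := by intro x y; rw [dotProduct_add, oP_add] }
    have hψ : ψ ≠ 1 := by
      intro h1
      apply h
      funext i
      have h2 := DFunLike.congr_fun h1 (Pi.single i 1)
      have h3 : omegaPow d (a ⬝ᵥ Pi.single i 1) = 1 := h2
      rw [dotProduct_single_one, omegaPow_eq,
        ← AddChar.map_zero_eq_one (ZMod.stdAddChar (N := d))] at h3
      exact ZMod.injective_stdAddChar h3
    exact AddChar.sum_eq_zero_of_ne_one hψ

section basics
variable (d n : ℕ) [NeZero d]

theorem ZP_mul (p p' : Fin n → ZMod d) : ZP d n p * ZP d n p' = ZP d n (p + p') := by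
  simp only [ZP, diagonal_mul_diagonal, add_dotProduct, oP_add]

theorem ZP_zero : ZP d n 0 = 1 := by
  simp [ZP, oP_zero]

theorem XQ_mul (q q' : Fin n → ZMod d) : XQ d n q * XQ d n q' = XQ d n (q + q') := by
  ext x z
  simp only [XQ, mul_apply, of_apply, mul_ite, mul_one, mul_zero]
  rw [Finset.sum_ite_eq' Finset.univ (z + q')]
  simp only [Finset.mem_univ, if_true, add_assoc, add_comm q q']

theorem XQ_zero : XQ d n 0 = 1 := by
  ext x z
  simp [XQ, one_apply]

theorem XZ (p q : Fin n → ZMod d) :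
    XQ d n q * ZP d n p = omegaPow d (-(p ⬝ᵥ q)) • (ZP d n p * XQ d n q) := by
  ext x z
  simp only [XQ, ZP, mul_diagonal, diagonal_mul, Matrix.smul_apply, of_apply, smul_eq_mul]
  split_ifs with h
  · subst h
    rw [mul_one, one_mul, ← oP_add]
    congr 1
    rw [dotProduct_add]; ring
  · simp

theorem quad_mul (Φ Ψ : Matrix (Fin n) (Fin n) (ZMod d)) :
    quadGate d n Φ * quadGate d n Ψ = quadGate d n (Φ + Ψ) := by
  simp only [quadGate, diagonal_mul_diagonal, add_mulVec, dotProduct_add, oP_add]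

theorem quad_zero : quadGate d n 0 = 1 := by
  simp [quadGate, oP_zero]

theorem quad_ZP (Φ : Matrix (Fin n) (Fin n) (ZMod d)) (p : Fin n → ZMod d) :
    ZP d n p * quadGate d n Φ = quadGate d n Φ * ZP d n p := by
  simp only [quadGate, ZP, diagonal_mul_diagonal, mul_comm]

theorem X_quad (Φ : Matrix (Fin n) (Fin n) (ZMod d)) (hΦ : Φ.IsSymm) (q : Fin n → ZMod d) :
    XQ d n q * quadGate d n Φ = quadGate d n Φ *
      (omegaPow d (q ⬝ᵥ (Φ *ᵥ q)) • (ZP d n (-2 • (Φ *ᵥ q)) * XQ d n q)) := by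
  ext x z
  simp only [XQ, ZP, quadGate, mul_diagonal, diagonal_mul, Matrix.smul_apply, of_apply, smul_eq_mul]
  split_ifs with h
  · subst h
    rw [mul_one, one_mul, ← oP_add, ← oP_add]
    congr 1
    have h1 : q ⬝ᵥ (Φ *ᵥ z) = z ⬝ᵥ (Φ *ᵥ q) := by
      rw [dotProduct_mulVec, ← mulVec_transpose, hΦ.eq, dotProduct_comm]
    simp only [mulVec_add, dotProduct_add, add_dotProduct, smul_dotProduct, h1,
      dotProduct_comm (Φ *ᵥ q)]
    simp only [zsmul_eq_mul]
    push_cast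
    ring
  · simp

theorem Pauli_mk (c : ZMod d) (p q : Fin n → ZMod d) :
    omegaPow d c • (ZP d n p * XQ d n q) ∈ Pauli d n := ⟨c, p, q, rfl⟩

theorem Pauli_Z (p : Fin n → ZMod d) : ZP d n p ∈ Pauli d n :=
  ⟨0, p, 0, by simp [oP_zero, XQ_zero]⟩

theorem Pauli_X (q : Fin n → ZMod d) : XQ d n q ∈ Pauli d n :=
  ⟨0, 0, q, by simp [oP_zero, ZP_zero]⟩

theorem Pauli_smul (c : ZMod d) {P : Mat d n} (h : P ∈ Pauli d n) :
    omegaPow d c • P ∈ Pauli d n := by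
  obtain ⟨a, p, q, rfl⟩ := h
  exact ⟨c + a, p, q, by rw [smul_smul, oP_add]⟩

theorem Pauli_mul {P Q : Mat d n} (h : P ∈ Pauli d n) (h' : Q ∈ Pauli d n) :
    P * Q ∈ Pauli d n := by
  obtain ⟨a, p, q, rfl⟩ := h
  obtain ⟨b, p', q', rfl⟩ := h'
  have : ZP d n p * XQ d n q * (ZP d n p' * XQ d n q') =
      omegaPow d (-(p' ⬝ᵥ q)) • (ZP d n (p + p') * XQ d n (q + q')) := by
    rw [← ZP_mul, ← XQ_mul,
      show ZP d n p * XQ d n q * (ZP d n p' * XQ d n q') =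
        ZP d n p * (XQ d n q * ZP d n p') * XQ d n q' by simp only [Matrix.mul_assoc], XZ]
    simp only [Matrix.mul_smul, Matrix.smul_mul, Matrix.mul_assoc]
  rw [Matrix.smul_mul, Matrix.mul_smul, this]
  exact Pauli_smul _ _ _ (Pauli_smul _ _ _ (Pauli_mk _ _ _ _ _))

theorem Pauli_quad (Φ : Matrix (Fin n) (Fin n) (ZMod d)) (hΦ : Φ.IsSymm) {P : Mat d n}
    (h : P ∈ Pauli d n) : ∃ Q ∈ Pauli d n, P * quadGate d n Φ = quadGate d n Φ * Q := by
  obtain ⟨a, p, q, rfl⟩ := h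
  refine ⟨omegaPow d a • (ZP d n p *
    (omegaPow d (q ⬝ᵥ (Φ *ᵥ q)) • (ZP d n (-2 • (Φ *ᵥ q)) * XQ d n q))), ?_, ?_⟩
  · exact Pauli_smul _ _ _ (Pauli_mul _ _ (Pauli_Z _ _ _) (Pauli_mk _ _ _ _ _))
  · rw [Matrix.smul_mul, Matrix.mul_assoc, X_quad d n Φ hΦ, ← Matrix.mul_assoc, quad_ZP,
      Matrix.mul_assoc, Matrix.mul_smul (quadGate d n Φ)]

def AD (Φ : Matrix (Fin n) (Fin n) (ZMod d)) (M : Mat d n) : Prop :=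
  Φ.IsSymm ∧ ∃ P ∈ Pauli d n, M = quadGate d n Φ * P

theorem AD_mul {Φ Ψ : Matrix (Fin n) (Fin n) (ZMod d)} {M N : Mat d n}
    (h : AD d n Φ M) (h' : AD d n Ψ N) : AD d n (Φ + Ψ) (M * N) := by
  obtain ⟨s, P, hP, rfl⟩ := h
  obtain ⟨s', P', hP', rfl⟩ := h'
  obtain ⟨Q, hQ, e⟩ := Pauli_quad d n Ψ s' hP
  refine ⟨s.add s', Q * P', Pauli_mul _ _ hQ hP', ?_⟩
  rw [show quadGate d n Φ * P * (quadGate d n Ψ * P') =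
    quadGate d n Φ * (P * quadGate d n Ψ) * P' by simp only [Matrix.mul_assoc], e, ← quad_mul]
  simp only [Matrix.mul_assoc]

theorem AD_one : AD d n 0 1 :=
  ⟨isSymm_zero, 1, by simpa [ZP_zero] using Pauli_Z d n 0, by simp [quad_zero]⟩

theorem AD_smul (c : ZMod d) {Φ : Matrix (Fin n) (Fin n) (ZMod d)} {M : Mat d n}
    (h : AD d n Φ M) : AD d n Φ (omegaPow d c • M) := by
  obtain ⟨s, P, hP, rfl⟩ := h
  exact ⟨s, _, Pauli_smul _ _ c hP, by rw [Matrix.mul_smul]⟩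

theorem AD_pow {Φ : Matrix (Fin n) (Fin n) (ZMod d)} {M : Mat d n}
    (h : AD d n Φ M) (k : ℕ) : AD d n (k • Φ) (M ^ k) := by
  induction k with
  | zero => simpa using AD_one d n
  | succ k ih => rw [pow_succ, succ_nsmul]; exact AD_mul _ _ ih h

theorem ZP_pow (p : Fin n → ZMod d) (k : ℕ) : ZP d n p ^ k = ZP d n (k • p) := by
  induction k with
  | zero => simp [ZP_zero]
  | succ k ih => rw [pow_succ, succ_nsmul, ih, ZP_mul]

theorem XQ_pow (p : Fin n → ZMod d) (k : ℕ) : XQ d n p ^ k = XQ d n (k • p) := by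
  induction k with
  | zero => simp [XQ_zero]
  | succ k ih => rw [pow_succ, succ_nsmul, ih, XQ_mul]

theorem vec2 (p : Fin 2 → ZMod d) :
    p = (p 0).val • Pi.single 0 1 + (p 1).val • Pi.single 1 1 := by
  funext i
  fin_cases i <;> simp [-ZMod.natCast_val, ZMod.natCast_zmod_val]

theorem ZP_gen (p : Fin 2 → ZMod d) :
    ZP d 2 p = Zi d 2 0 ^ (p 0).val * Zi d 2 1 ^ (p 1).val := by
  rw [Zi, Zi, ZP_pow, ZP_pow, ZP_mul, ← vec2]

theorem XQ_gen (p : Fin 2 → ZMod d) :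
    XQ d 2 p = Xi d 2 0 ^ (p 0).val * Xi d 2 1 ^ (p 1).val := by
  rw [Xi, Xi, XQ_pow, XQ_pow, XQ_mul, ← vec2]

theorem gconj_mul {G : Mat d n} (hG : Gᴴ * G = 1) (A B : Mat d n) :
    G * (A * B) * Gᴴ = (G * A * Gᴴ) * (G * B * Gᴴ) := by
  rw [show (G * A * Gᴴ) * (G * B * Gᴴ) = G * A * (Gᴴ * G) * B * Gᴴ by
    simp only [Matrix.mul_assoc], hG]
  simp only [Matrix.mul_assoc, Matrix.one_mul]

theorem gconj_pow {G : Mat d n} (hG : Gᴴ * G = 1) (hG' : G * Gᴴ = 1) (A : Mat d n) (k : ℕ) :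
    G * A ^ k * Gᴴ = (G * A * Gᴴ) ^ k := by
  induction k with
  | zero => simp [hG']
  | succ k ih => rw [pow_succ, pow_succ, gconj_mul d n hG, ih]

theorem AD_conj {G : Mat d 2} (hG : Gᴴ * G = 1) (hG' : G * Gᴴ = 1)
    (A B : Fin 2 → Matrix (Fin 2) (Fin 2) (ZMod d))
    (hA : ∀ i, AD d 2 (A i) (G * Zi d 2 i * Gᴴ)) (hB : ∀ i, AD d 2 (B i) (G * Xi d 2 i * Gᴴ))
    (c : ZMod d) (p q : Fin 2 → ZMod d) :
    AD d 2 (p 0 • A 0 + p 1 • A 1 + (q 0 • B 0 + q 1 • B 1))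
      (G * (omegaPow d c • (ZP d 2 p * XQ d 2 q)) * Gᴴ) := by
  have key : ∀ (a : ZMod d) (M : Matrix (Fin 2) (Fin 2) (ZMod d)), a • M = a.val • M := by
    intro a M
    ext i j
    simp
  rw [Matrix.mul_smul, Matrix.smul_mul, ZP_gen, XQ_gen]
  simp only [gconj_mul d 2 hG, gconj_pow d 2 hG hG', key]
  exact AD_smul _ _ _ (AD_mul _ _ (AD_mul _ _ (AD_pow _ _ (hA 0) _) (AD_pow _ _ (hA 1) _))
    (AD_mul _ _ (AD_pow _ _ (hB 0) _) (AD_pow _ _ (hB 1) _)))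

theorem Cliff_mk {C : Mat d n} (h1 : C * Cᴴ = 1)
    (hZ : ∀ p, C * ZP d n p * Cᴴ ∈ Pauli d n) (hX : ∀ q, C * XQ d n q * Cᴴ ∈ Pauli d n) :
    C ∈ Clifford d n := by
  have h2 : Cᴴ * C = 1 := mul_eq_one_comm.mp h1
  refine ⟨mem_unitaryGroup_iff.mpr h1, ?_⟩
  rintro P ⟨c, p, q, rfl⟩
  rw [Matrix.mul_smul, Matrix.smul_mul, gconj_mul d n h2]
  exact Pauli_smul _ _ _ (Pauli_mul _ _ (hZ p) (hX q))

theorem Cliff_mul {C D : Mat d n} (h : C ∈ Clifford d n) (h' : D ∈ Clifford d n) :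
    C * D ∈ Clifford d n := by
  refine ⟨mul_mem h.1 h'.1, fun P hP => ?_⟩
  rw [conjTranspose_mul, show C * D * P * (Dᴴ * Cᴴ) = C * (D * P * Dᴴ) * Cᴴ by
    simp only [Matrix.mul_assoc]]
  exact h.2 _ (h'.2 _ hP)

theorem quad_star (Φ : Matrix (Fin n) (Fin n) (ZMod d)) :
    (quadGate d n Φ)ᴴ = quadGate d n (-Φ) := by
  rw [quadGate, quadGate, diagonal_conjTranspose]
  congr 1
  funext z
  simp only [Pi.star_apply, oP_star, neg_mulVec, dotProduct_neg]

theorem quad_conj_X (Φ : Matrix (Fin n) (Fin n) (ZMod d)) (hΦ : Φ.IsSymm) (q : Fin n → ZMod d) :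
    quadGate d n Φ * XQ d n q * (quadGate d n Φ)ᴴ =
      omegaPow d (-(q ⬝ᵥ (Φ *ᵥ q))) • (ZP d n (2 • (Φ *ᵥ q)) * XQ d n q) := by
  rw [quad_star, Matrix.mul_assoc, X_quad d n (-Φ) hΦ.neg, ← Matrix.mul_assoc, quad_mul,
    add_neg_cancel, quad_zero, Matrix.one_mul]
  simp [neg_mulVec]

theorem quad_Cliff (Φ : Matrix (Fin n) (Fin n) (ZMod d)) (hΦ : Φ.IsSymm) :
    quadGate d n Φ ∈ Clifford d n := by
  have h1 : quadGate d n Φ * (quadGate d n Φ)ᴴ = 1 := by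
    rw [quad_star, quad_mul, add_neg_cancel, quad_zero]
  refine Cliff_mk d n h1 ?_ ?_
  · intro p
    rw [← quad_ZP, Matrix.mul_assoc, h1, Matrix.mul_one]
    exact Pauli_Z _ _ _
  · intro q
    rw [quad_conj_X d n Φ hΦ]
    exact Pauli_mk _ _ _ _ _

end basics

/-- normalised two-qudit Fourier gate. -/
def F2 (d : ℕ) : Mat d 2 := Matrix.of fun x z => (d : ℂ)⁻¹ * omegaPow d (x ⬝ᵥ z)

section two
variable (d : ℕ) [NeZero d]

theorem F2_conj (p : Fin 2 → ZMod d) : F2 d * ZP d 2 p * (F2 d)ᴴ = XQ d 2 (-p) := by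
  ext x y
  have hd : (d : ℂ) ≠ 0 := NeZero.ne _
  have : ∀ z : Fin 2 → ZMod d, (F2 d * ZP d 2 p) x z * (F2 d)ᴴ z y =
      ((d : ℂ) ^ 2)⁻¹ * omegaPow d ((x + p - y) ⬝ᵥ z) := by
    intro z
    simp only [F2, ZP, mul_diagonal, conjTranspose_apply, of_apply, star_mul', oP_star]
    rw [sub_dotProduct, add_dotProduct, sub_eq_add_neg, oP_add, oP_add]
    simp
    ring
  rw [mul_apply, Finset.sum_congr rfl (fun z _ => this z), ← Finset.mul_sum, oP_sum]
  simp only [XQ, of_apply]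
  have e : (x + p - y = 0) ↔ (x = y + -p) := by
    rw [sub_eq_zero, ← sub_eq_add_neg, eq_sub_iff_add_eq]
  simp only [e]
  split_ifs
  · field_simp
  · simp

theorem F2_unit : F2 d * (F2 d)ᴴ = 1 := by
  have := F2_conj d 0
  rwa [ZP_zero, Matrix.mul_one, neg_zero, XQ_zero] at this

theorem F2_X (q : Fin 2 → ZMod d) : F2 d * XQ d 2 q = ZP d 2 q * F2 d := by
  ext x z
  rw [ZP, diagonal_mul, mul_apply]
  simp only [F2, XQ, of_apply, mul_ite, mul_one, mul_zero]
  rw [Finset.sum_ite_eq' Finset.univ (z + q)]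
  simp only [Finset.mem_univ, if_true, dotProduct_add, oP_add, dotProduct_comm x q]
  ring

theorem F2_Cliff : F2 d ∈ Clifford d 2 := by
  refine Cliff_mk d 2 (F2_unit d) ?_ ?_
  · intro p
    rw [F2_conj]
    exact Pauli_X _ _ _
  · intro q
    rw [F2_X, Matrix.mul_assoc, F2_unit, Matrix.mul_one]
    exact Pauli_Z _ _ _

/-- linear gate: `|z⟩ ↦ |B z⟩`. -/
def LG (B : Matrix (Fin 2) (Fin 2) (ZMod d)) : Mat d 2 :=
  Matrix.of fun x z => if x = B *ᵥ z then 1 else 0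

variable {d}

theorem LG_X (B : Matrix (Fin 2) (Fin 2) (ZMod d)) (q : Fin 2 → ZMod d) :
    LG d B * XQ d 2 q = XQ d 2 (B *ᵥ q) * LG d B := by
  ext x z
  simp only [LG, XQ, mul_apply, of_apply, mul_ite, mul_one, mul_zero]
  rw [Finset.sum_ite_eq' Finset.univ (z + q), Finset.sum_ite_eq' Finset.univ (B *ᵥ z)]
  simp only [Finset.mem_univ, if_true, mulVec_add]

theorem LG_Z (B : Matrix (Fin 2) (Fin 2) (ZMod d)) (p : Fin 2 → ZMod d) :
    LG d B * ZP d 2 (Bᵀ *ᵥ p) = ZP d 2 p * LG d B := by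
  ext x z
  simp only [LG, ZP, mul_diagonal, diagonal_mul, of_apply]
  split_ifs with h
  · subst h
    rw [one_mul, mul_one, mulVec_transpose, dotProduct_mulVec]
  · simp

theorem LG_unit (A B : Matrix (Fin 2) (Fin 2) (ZMod d)) (h : B * A = 1) :
    LG d B * (LG d B)ᴴ = 1 := by
  have h' : A * B = 1 := mul_eq_one_comm.mp h
  ext x y
  simp only [LG, mul_apply, of_apply, conjTranspose_apply]
  rw [Finset.sum_eq_single (A *ᵥ x)]
  · rw [mulVec_mulVec, h, one_mulVec]
    simp [one_apply, eq_comm]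
  · intro z _ hz
    rw [if_neg, zero_mul]
    rintro rfl
    exact hz (by rw [mulVec_mulVec, h', one_mulVec])
  · simp

theorem LG_conj_Z (A B : Matrix (Fin 2) (Fin 2) (ZMod d)) (h : B * A = 1) (p : Fin 2 → ZMod d) :
    LG d B * ZP d 2 p * (LG d B)ᴴ = ZP d 2 (Aᵀ *ᵥ p) := by
  have : p = Bᵀ *ᵥ (Aᵀ *ᵥ p) := by
    rw [mulVec_mulVec, ← transpose_mul, mul_eq_one_comm.mp h, transpose_one, one_mulVec]
  conv_lhs => rw [this]
  rw [LG_Z, Matrix.mul_assoc, LG_unit A B h, Matrix.mul_one]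

theorem LG_Cliff (A B : Matrix (Fin 2) (Fin 2) (ZMod d)) (h : B * A = 1) :
    LG d B ∈ Clifford d 2 := by
  refine Cliff_mk d 2 (LG_unit A B h) ?_ ?_
  · intro p
    rw [LG_conj_Z A B h]
    exact Pauli_Z _ _ _
  · intro q
    rw [LG_X, Matrix.mul_assoc, LG_unit A B h, Matrix.mul_one]
    exact Pauli_X _ _ _

theorem exists_lin [Fact d.Prime] (p : Fin 2 → ZMod d) (hp : p ≠ 0) :
    ∃ C ∈ Clifford d 2, C * Zi d 2 0 * Cᴴ = ZP d 2 p := by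
  have : ∃ A : Matrix (Fin 2) (Fin 2) (ZMod d), IsUnit A.det ∧ Aᵀ *ᵥ (Pi.single 0 1) = p := by
    by_cases h0 : p 0 = 0
    · have h1 : p 1 ≠ 0 := by
        intro h1
        apply hp
        funext i
        fin_cases i <;> assumption
      refine ⟨!![p 0, p 1; 1, 0], ?_, ?_⟩
      · simp [det_fin_two, h1]
      · funext i
        fin_cases i <;> simp
    · refine ⟨!![p 0, p 1; 0, 1], ?_, ?_⟩
      · simp [det_fin_two, h0]
      · funext i
        fin_cases i <;> simp
  obtain ⟨A, hA, e⟩ := this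
  have h := nonsing_inv_mul A hA
  exact ⟨_, LG_Cliff A A⁻¹ h, by rw [Zi, LG_conj_Z A A⁻¹ h, e]⟩

theorem exists_sym [Fact d.Prime] (q v : Fin 2 → ZMod d) (hq : q ≠ 0) :
    ∃ Φ : Matrix (Fin 2) (Fin 2) (ZMod d), Φ.IsSymm ∧ Φ *ᵥ q = v := by
  by_cases h0 : q 0 = 0
  · have h1 : q 1 ≠ 0 := by
      intro h1
      apply hq
      funext i
      fin_cases i <;> assumption
    refine ⟨!![0, v 0 / q 1; v 0 / q 1, v 1 / q 1], ?_, ?_⟩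
    · ext i j
      fin_cases i <;> fin_cases j <;> simp
    · funext i
      fin_cases i <;> simp [mulVec, dotProduct, Fin.sum_univ_two, h0] <;> field_simp
  · refine ⟨!![(v 0 - v 1 / q 0 * q 1) / q 0, v 1 / q 0; v 1 / q 0, 0], ?_, ?_⟩
    · ext i j
      fin_cases i <;> fin_cases j <;> simp
    · funext i
      fin_cases i <;> simp [mulVec, dotProduct, Fin.sum_univ_two] <;> field_simp
      ring

theorem exists_Cliff [Fact d.Prime] (hodd : Odd d) (p q : Fin 2 → ZMod d) (h : p ≠ 0 ∨ q ≠ 0) :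
    ∃ C ∈ Clifford d 2, ∃ c, C * Zi d 2 0 * Cᴴ = omegaPow d c • (ZP d 2 p * XQ d 2 q) := by
  by_cases hq : q = 0
  · obtain ⟨C, hC, e⟩ := exists_lin p (by tauto)
    refine ⟨C, hC, 0, ?_⟩
    rw [e, hq, oP_zero, XQ_zero, one_smul, Matrix.mul_one]
  · obtain ⟨C, hC, e⟩ := exists_lin (-q) (neg_ne_zero.mpr hq)
    have h2 : (2 : ZMod d) ≠ 0 := by
      have : ringChar (ZMod d) ≠ 2 := by
        rw [ZMod.ringChar_zmod_n]
        rintro rfl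
        exact absurd hodd (by decide)
      exact Ring.two_ne_zero this
    obtain ⟨Φ, hΦ, e'⟩ := exists_sym q ((2 : ZMod d)⁻¹ • p) hq
    refine ⟨quadGate d 2 Φ * (F2 d * C),
      Cliff_mul _ _ (quad_Cliff _ _ Φ hΦ) (Cliff_mul _ _ (F2_Cliff d) hC), -(q ⬝ᵥ (Φ *ᵥ q)), ?_⟩
    · have e2 : 2 • (Φ *ᵥ q) = p := by
        rw [e']
        funext i
        simp [h2]
      rw [conjTranspose_mul, conjTranspose_mul,
        show quadGate d 2 Φ * (F2 d * C) * Zi d 2 0 * (Cᴴ * (F2 d)ᴴ * (quadGate d 2 Φ)ᴴ) =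
          quadGate d 2 Φ * (F2 d * (C * Zi d 2 0 * Cᴴ) * (F2 d)ᴴ) * (quadGate d 2 Φ)ᴴ by
          simp only [Matrix.mul_assoc], e, F2_conj, neg_neg, quad_conj_X d 2 Φ hΦ, e2]

theorem exists_dep [Fact d.Prime] (A B : Fin 2 → Matrix (Fin 2) (Fin 2) (ZMod d))
    (hA : ∀ i, (A i).IsSymm) (hB : ∀ i, (B i).IsSymm) :
    ∃ p q : Fin 2 → ZMod d, (p ≠ 0 ∨ q ≠ 0) ∧
      p 0 • A 0 + p 1 • A 1 + (q 0 • B 0 + q 1 • B 1) = 0 := by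
  let T : (Fin 4 → ZMod d) →ₗ[ZMod d] (Fin 3 → ZMod d) :=
    (!![A 0 0 0, A 1 0 0, B 0 0 0, B 1 0 0;
       A 0 0 1, A 1 0 1, B 0 0 1, B 1 0 1;
       A 0 1 1, A 1 1 1, B 0 1 1, B 1 1 1]).mulVecLin
  have hk : LinearMap.ker T ≠ ⊥ := LinearMap.ker_ne_bot_of_finrank_lt (by simp)
  obtain ⟨w, hw, hw0⟩ := (Submodule.ne_bot_iff _).mp hk
  have hw' : T w = 0 := hw
  refine ⟨![w 0, w 1], ![w 2, w 3], ?_, ?_⟩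
  · by_contra! hc
    apply hw0
    have a0 := congrFun hc.1 0
    have a1 := congrFun hc.1 1
    have a2 := congrFun hc.2 0
    have a3 := congrFun hc.2 1
    funext i
    fin_cases i <;> simpa
  · have e0 := congrFun hw' 0
    have e1 := congrFun hw' 1
    have e2 := congrFun hw' 2
    simp [T, mulVec, dotProduct, Fin.sum_univ_four] at e0 e1 e2
    have sA : ∀ i, A i 1 0 = A i 0 1 := fun i => (hA i).apply 0 1
    have sB : ∀ i, B i 1 0 = B i 0 1 := fun i => (hB i).apply 0 1
    ext i j
    fin_cases i <;> fin_cases j <;> simp [sA, sB]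
    · linear_combination e0
    · linear_combination e1
    · linear_combination e1
    · linear_combination e2

end two

/-- Every simplified two-qudit third-level gate `G` admits a Clifford correction `C`
such that `GC` is simplified and `(GC) Z₁ (GC)*` is a Pauli gate. -/
theorem stmt5 (d : ℕ) [NeZero d] (hp : Nat.Prime d) (hodd : Odd d)
    (G : Mat d 2) (hG : G ∈ Third d 2) (hs : Simplified d 2 G) :
    ∃ C ∈ Clifford d 2, G * C ∈ Third d 2 ∧ Simplified d 2 (G * C) ∧
      (G * C) * Zi d 2 0 * (G * C)ᴴ ∈ Pauli d 2 := by
  have : Fact d.Prime := ⟨hp⟩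
  have hG' : G * Gᴴ = 1 := mem_unitaryGroup_iff.mp hG.1
  have hG'' : Gᴴ * G = 1 := mul_eq_one_comm.mp hG'
  choose A hA using fun i => (hs i).1
  choose B hB using fun i => (hs i).2
  have hA' : ∀ i, AD d 2 (A i) (G * Zi d 2 i * Gᴴ) := hA
  have hB' : ∀ i, AD d 2 (B i) (G * Xi d 2 i * Gᴴ) := hB
  obtain ⟨p, q, hpq, hdep⟩ := exists_dep A B (fun i => (hA i).1) (fun i => (hB i).1)
  obtain ⟨C, hC, c, hc⟩ := exists_Cliff hodd p q hpq
  have hconj : ∀ P, (G * C) * P * (G * C)ᴴ = G * (C * P * Cᴴ) * Gᴴ := by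
    intro P
    rw [conjTranspose_mul]
    simp only [Matrix.mul_assoc]
  have hAD : ∀ P ∈ Pauli d 2, AlmostDiag d 2 ((G * C) * P * (G * C)ᴴ) := by
    intro P hP
    rw [hconj]
    obtain ⟨c', p', q', e⟩ := hC.2 P hP
    rw [e]
    exact ⟨_, AD_conj d hG'' hG' A B hA' hB' c' p' q'⟩
  refine ⟨C, hC, ⟨mul_mem hG.1 hC.1, ?_⟩, ?_, ?_⟩
  · intro P hP
    rw [hconj]
    exact hG.2 _ (hC.2 _ hP)
  · intro i
    exact ⟨hAD _ (Pauli_Z _ _ _), hAD _ (Pauli_X _ _ _)⟩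
  · rw [hconj, hc]
    have h := AD_conj d hG'' hG' A B hA' hB' c p q
    rw [hdep] at h
    obtain ⟨_, P, hP, e⟩ := h
    rw [e, quad_zero, Matrix.one_mul]
    exact hP

end
end

section
/- Let d be an odd prime, n ∈ ℕ, and k ≥ 3. Let G ∈ C_k^n with conjugate tuple (U_i, V_i)_{i=1..n}, where U_i = G Z_i G* and V_i = G X_i G*. Then G is semi-Clifford (i.e. G = C₁ D C₂ for Clifford gates C₁, C₂ ∈ C_2^n and a diagonal gate D ∈ C_k^n) if and only if there exists a Lagrangian semibasis {(p_i, q_i)}_{i=1..n} of (ZMod d)^{2n} such that for each i the gate U^{p_i} V^{q_i} := U_1^{p_{i,1}} ⋯ U_n^{p_{i,n}} V_1^{q_{i,1}} ⋯ V_n^{q_{i,n}} is a Pauli gate. -/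
open Matrix

noncomputable section

/-- The Clifford hierarchy: `CH d n 1` is the Pauli group and
`CH d n (k+1) = { G unitary | G P G* ∈ CH d n k for all Pauli P }`. -/
def CH (d n : ℕ) [NeZero d] : ℕ → Set (Mat d n)
  | 0 => Pauli d n
  | 1 => Pauli d n
  | (k + 2) => { G | G ∈ Matrix.unitaryGroup (Fin n → ZMod d) ℂ ∧
      ∀ P ∈ Pauli d n, G * P * Gᴴ ∈ CH d n (k + 1) }

namespace SC

variable {d n : ℕ} [NeZero d]

abbrev V (d n : ℕ) := (Fin n → ZMod d) × (Fin n → ZMod d)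

lemma prim : IsPrimitiveRoot (omega d) d := Complex.isPrimitiveRoot_exp d (NeZero.ne d)

lemma w_zero : omegaPow d 0 = 1 := by simp [omegaPow]

lemma w_add (a b : ZMod d) : omegaPow d (a + b) = omegaPow d a * omegaPow d b := by
  unfold omegaPow
  rw [← pow_add, ZMod.val_add]
  conv_rhs => rw [← Nat.mod_add_div (a.val + b.val) d, pow_add, pow_mul, prim.pow_eq_one, one_pow,
    mul_one]

lemma w_eq_one {a : ZMod d} (h : omegaPow d a = 1) : a = 0 := by
  unfold omegaPow at h
  have := (prim (d := d)).dvd_of_pow_eq_one _ h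
  have h2 := Nat.eq_zero_of_dvd_of_lt this (ZMod.val_lt a)
  exact (ZMod.val_eq_zero a).1 h2

lemma w_ne (a : ZMod d) : omegaPow d a ≠ 0 := by
  intro h
  have := w_add a (-a)
  rw [h, add_neg_cancel, w_zero] at this
  simp at this

lemma w_inj {a b : ZMod d} (h : omegaPow d a = omegaPow d b) : a = b := by
  have h1 : omegaPow d (a - b) = 1 := by
    apply mul_right_cancel₀ (w_ne b)
    rw [← w_add, sub_add_cancel, h, one_mul]
  exact sub_eq_zero.1 (w_eq_one h1)

lemma w_star (a : ZMod d) : star (omegaPow d a) = omegaPow d (-a) := by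
  have h1 : omegaPow d a * omegaPow d (-a) = 1 := by rw [← w_add, add_neg_cancel, w_zero]
  have hn : ‖omega d‖ = 1 := (prim (d := d)).norm'_eq_one (NeZero.ne d)
  have h2 : ‖omegaPow d a‖ = 1 := by simp [omegaPow, hn]
  have h3 : omegaPow d a * star (omegaPow d a) = 1 := by
    have := Complex.mul_conj (omegaPow d a)
    rw [Complex.normSq_eq_norm_sq, h2] at this
    simpa using this
  exact mul_left_cancel₀ (w_ne a) (h3.trans h1.symm)

/-- Weyl operators -/
def T (v : V d n) : Mat d n := omegaPow d (-(2⁻¹ * (v.1 ⬝ᵥ v.2))) • (ZP d n v.1 * XQ d n v.2)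

lemma ZX_apply (p q x y : Fin n → ZMod d) :
    (ZP d n p * XQ d n q) x y = if x = y + q then omegaPow d (p ⬝ᵥ x) else 0 := by
  simp [ZP, XQ, Matrix.diagonal_mul]

lemma T_apply (v : V d n) (x y : Fin n → ZMod d) :
    T v x y = if x = y + v.2 then omegaPow d (-(2⁻¹ * (v.1 ⬝ᵥ v.2)) + v.1 ⬝ᵥ x) else 0 := by
  rw [T, Matrix.smul_apply, ZX_apply]
  split_ifs <;> simp [w_add]

def symp (d n : ℕ) : V d n →ₗ[ZMod d] V d n →ₗ[ZMod d] ZMod d :=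
  LinearMap.mk₂ (ZMod d) (fun u v => u.1 ⬝ᵥ v.2 - v.1 ⬝ᵥ u.2)
    (by intros; simp [add_dotProduct, dotProduct_add]; ring)
    (by intros; simp [mul_sub])
    (by intros; simp [add_dotProduct, dotProduct_add]; ring)
    (by intros; simp [mul_sub])

lemma symp_def (u v : V d n) : symp d n u v = u.1 ⬝ᵥ v.2 - v.1 ⬝ᵥ u.2 := rfl

lemma symp_swap (u v : V d n) : symp d n u v = - symp d n v u := by
  simp [symp_def]

lemma symp_self (u : V d n) : symp d n u u = 0 := by simp [symp_def]

lemma symp_nondeg {u : V d n} (h : ∀ v, symp d n u v = 0) : u = 0 := by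
  ext i
  · simpa [symp_def] using h (0, Pi.single i 1)
  · simpa [symp_def] using h (Pi.single i 1, 0)

lemma two_inv (hp : d.Prime) (hodd : Odd d) : (2 : ZMod d) * 2⁻¹ = 1 := by
  haveI := Fact.mk hp
  apply mul_inv_cancel₀
  intro h
  have : ((2 : ℕ) : ZMod d) = 0 := by exact_mod_cast h
  rw [ZMod.natCast_eq_zero_iff] at this
  have h2 := hp.two_le
  have h3 := Nat.le_of_dvd (by norm_num) this
  obtain ⟨m, hm⟩ := hodd
  omega

lemma T_mul (h2 : (2 : ZMod d) * 2⁻¹ = 1) (u v : V d n) :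
    T u * T v = omegaPow d (2⁻¹ * symp d n u v) • T (u + v) := by
  ext x y
  rw [Matrix.mul_apply, Finset.sum_eq_single (y + v.2)]
  · rw [Matrix.smul_apply, T_apply, T_apply, T_apply]
    have : (x = y + (u + v).2) ↔ (x = y + v.2 + u.2) := by
      rw [Prod.snd_add, add_comm u.2 v.2, add_assoc]
    simp only [this, if_true]
    split_ifs with hx
    · subst hx
      rw [smul_eq_mul, ← w_add, ← w_add]
      congr 1
      simp only [symp_def, Prod.fst_add, Prod.snd_add, add_dotProduct, dotProduct_add]
      linear_combination (v.1 ⬝ᵥ u.2) * h2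
    · simp
  · intro b _ hb
    rw [T_apply v, if_neg hb, mul_zero]
  · simp

lemma T_zero : T (0 : V d n) = 1 := by
  ext x y
  rw [T_apply]
  simp [Matrix.one_apply, w_zero]

lemma T_star (h2 : (2 : ZMod d) * 2⁻¹ = 1) (v : V d n) : (T v)ᴴ = T (-v) := by
  ext x y
  rw [Matrix.conjTranspose_apply, T_apply, T_apply]
  have : (x = y + (-v).2) ↔ (y = x + v.2) := by
    constructor
    · rintro rfl; simp
    · rintro rfl; simp
  simp only [this]
  split_ifs with h
  · subst h
    rw [w_star]
    congr 1
    simp [dotProduct_add]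
    linear_combination (v.1 ⬝ᵥ v.2) * h2
  · simp

lemma T_comm (h2 : (2 : ZMod d) * 2⁻¹ = 1) (u v : V d n) :
    T u * T v = omegaPow d (symp d n u v) • (T v * T u) := by
  rw [T_mul h2, T_mul h2, smul_smul, ← w_add, add_comm u v, symp_swap v u]
  congr 2
  linear_combination (symp d n u v) * h2

lemma T_mul_star (h2 : (2 : ZMod d) * 2⁻¹ = 1) (u : V d n) : T u * (T u)ᴴ = 1 := by
  rw [T_star h2, T_mul h2]; simp [symp_self, w_zero, T_zero]

lemma T_ne (h2 : (2 : ZMod d) * 2⁻¹ = 1) (u : V d n) : T u ≠ 0 := by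
  intro h
  have := T_mul_star h2 u
  rw [h, zero_mul] at this
  exact zero_ne_one this

lemma symp_of_comm (h2 : (2 : ZMod d) * 2⁻¹ = 1) {u v : V d n} (h : T u * T v = T v * T u) :
    symp d n u v = 0 := by
  have h1 := T_comm h2 u v
  rw [h] at h1
  apply w_eq_one
  have h3 : (1 - omegaPow d (symp d n u v)) • (T v * T u) = 0 := by
    rw [sub_smul, ← h1, one_smul, sub_self]
  rw [T_mul h2, smul_smul] at h3
  rcases smul_eq_zero.1 h3 with h4 | h4
  · rcases mul_eq_zero.1 h4 with h5 | h5
    · exact (sub_eq_zero.1 h5).symm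
    · exact absurd h5 (w_ne _)
  · exact absurd h4 (T_ne h2 _)

lemma T_scalar (h2 : (2 : ZMod d) * 2⁻¹ = 1) {u : V d n} {c : ℂ} (h : T u = c • 1) : u = 0 := by
  apply symp_nondeg
  intro v
  apply symp_of_comm h2
  rw [h]; simp

lemma T_trace (h2 : (2 : ZMod d) * 2⁻¹ = 1) {u : V d n} (h : u ≠ 0) : (T u).trace = 0 := by
  by_contra h0
  apply h
  apply symp_nondeg
  intro v
  have h1 : T u * T v * (T v)ᴴ = omegaPow d (symp d n u v) • (T v * T u) * (T v)ᴴ := by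
    rw [T_comm h2]
  rw [mul_assoc, T_mul_star h2, mul_one] at h1
  have h3 := congrArg Matrix.trace h1
  rw [Matrix.smul_mul, Matrix.trace_smul, Matrix.trace_mul_comm, ← mul_assoc,
    mul_eq_one_comm.1 (T_mul_star h2 v), one_mul, smul_eq_mul] at h3
  apply w_eq_one
  apply mul_right_cancel₀ h0
  rw [← h3, one_mul]

lemma mem_Pauli {M : Mat d n} : M ∈ Pauli d n ↔ ∃ (c : ZMod d) (v : V d n), M = omegaPow d c • T v := by
  constructor
  · rintro ⟨c, p, q, rfl⟩
    refine ⟨c + 2⁻¹ * (p ⬝ᵥ q), (p, q), ?_⟩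
    rw [T, smul_smul, ← w_add]
    simp
  · rintro ⟨c, v, rfl⟩
    refine ⟨c + -(2⁻¹ * (v.1 ⬝ᵥ v.2)), v.1, v.2, ?_⟩
    rw [T, smul_smul, ← w_add]

lemma ZP_eq (p : Fin n → ZMod d) : ZP d n p = T (p, 0) := by
  ext x y
  rw [T_apply]
  simp [ZP, Matrix.diagonal_apply]

lemma XQ_eq (q : Fin n → ZMod d) : XQ d n q = T (0, q) := by
  ext x y
  rw [T_apply]
  simp [XQ, w_zero]

lemma diag_of_comm {M : Mat d n} (h : ∀ i, M * Zi d n i = Zi d n i * M) : M.IsDiag := by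
  intro x y hxy
  obtain ⟨i, hi⟩ := Function.ne_iff.1 hxy
  have h1 := congrFun (congrFun (h i) x) y
  rw [Zi, ZP, Matrix.mul_diagonal, Matrix.diagonal_mul] at h1
  by_contra h0
  rw [mul_comm] at h1
  have h3 := w_inj (mul_right_cancel₀ h0 h1)
  simp at h3
  exact hi h3.symm

lemma scalar_of_comm {M : Mat d n} (h : ∀ v, M * T v = T v * M) : M = M 0 0 • 1 := by
  have hd : M.IsDiag := diag_of_comm fun i => by rw [Zi, ZP_eq]; exact h _
  ext x y
  by_cases hxy : x = y
  · subst hxy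
    have h1 := congrFun (congrFun (h (0, x)) x) 0
    rw [← XQ_eq] at h1
    simpa [XQ, Matrix.mul_apply, Finset.sum_ite_eq, eq_comm] using h1
  · simp [hd hxy, hxy]

/-- Existence of the Weil unitary. -/
lemma exists_unitary (h2 : (2 : ZMod d) * 2⁻¹ = 1) (S : V d n →ₗ[ZMod d] V d n)
    (hS : ∀ u v, symp d n (S u) (S v) = symp d n u v) :
    ∃ C : Mat d n, C ∈ Matrix.unitaryGroup (Fin n → ZMod d) ℂ ∧ ∀ v, C * T v * Cᴴ = T (S v) := by
  have hinj : Function.Injective S := by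
    rw [← LinearMap.ker_eq_bot, LinearMap.ker_eq_bot']
    intro u hu
    apply symp_nondeg
    intro v
    rw [← hS, hu]; simp
  have hsurj : Function.Surjective S := Finite.surjective_of_injective hinj
  let F : Mat d n → Mat d n := fun A => ∑ v, T (S v) * A * (T v)ᴴ
  have hF : ∀ A u, F A * T u = T (S u) * F A := by
    intro A u
    have h1 : T (S u) * F A * (T u)ᴴ = F A := by
      simp only [F]
      rw [Finset.mul_sum, Finset.sum_mul]
      conv_rhs => rw [← Equiv.sum_comp (Equiv.addLeft u)]
      apply Finset.sum_congr rfl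
      intro v _
      simp only [Equiv.coe_addLeft]
      have e1 : T (S (u + v)) = omegaPow d (-(2⁻¹ * symp d n u v)) • (T (S u) * T (S v)) := by
        rw [T_mul h2, hS, smul_smul, ← w_add, map_add]; simp [w_zero]
      have e2 : (T (u + v))ᴴ = omegaPow d (2⁻¹ * symp d n u v) • ((T v)ᴴ * (T u)ᴴ) := by
        rw [← Matrix.conjTranspose_mul, T_mul h2, Matrix.conjTranspose_smul, w_star, smul_smul,
          ← w_add]
        simp [w_zero]
      rw [e1, e2, Matrix.smul_mul, Matrix.smul_mul, Matrix.mul_smul, smul_smul, ← w_add]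
      simp [w_zero, mul_assoc]
    conv_lhs => rw [← h1]
    rw [mul_assoc, mul_eq_one_comm.1 (T_mul_star h2 u), mul_one]
  have hex : ∃ A, F A ≠ 0 := by
    by_contra! hcon
    have h1 : ∀ a : Fin n → ZMod d, ∑ v, T (S v) a a * star (T v 0 0) = 0 := by
      intro a
      have this : F (Matrix.single a 0 1) a 0 = 0 := by rw [hcon]; rfl
      simp only [F, Matrix.sum_apply] at this
      refine Eq.trans ?_ this
      apply Finset.sum_congr rfl
      intro v _
      rw [Matrix.mul_apply, Finset.sum_eq_single 0]
      · simp
      · intro b _ hb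
        simp [hb.symm, hb]
      · simp
    have h3 : ∑ a : Fin n → ZMod d, ∑ v, T (S v) a a * star (T v 0 0) = 0 :=
      Finset.sum_eq_zero fun a _ => h1 a
    rw [Finset.sum_comm, Finset.sum_eq_single 0] at h3
    · simp [T_zero] at h3
      exact NeZero.ne d h3.1
    · intro v _ hv
      rw [← Finset.sum_mul]
      have : (T (S v)).trace = 0 := T_trace h2 fun h => hv (hinj (by simpa using h))
      rw [Matrix.trace] at this
      simp only [Matrix.diag_apply] at this
      rw [this, zero_mul]
    · simp
  obtain ⟨A, hA⟩ := hex
  have hC := hF A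
  generalize F A = C at hA hC
  have hC' : ∀ u, Cᴴ * T (S u) = T u * Cᴴ := by
    intro u
    have := congrArg Matrix.conjTranspose (hC (-u))
    rw [Matrix.conjTranspose_mul, Matrix.conjTranspose_mul, T_star h2, T_star h2, map_neg, neg_neg,
      neg_neg] at this
    exact this.symm
  have hsc : C * Cᴴ = (C * Cᴴ) 0 0 • 1 := by
    apply scalar_of_comm
    intro v
    obtain ⟨u, rfl⟩ := hsurj v
    rw [mul_assoc, hC', ← mul_assoc, hC, mul_assoc]
  have hr : (C * Cᴴ) 0 0 = ((∑ j, Complex.normSq (C 0 j) : ℝ) : ℂ) := by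
    rw [Matrix.mul_apply]
    push_cast
    apply Finset.sum_congr rfl
    intro j _
    exact Complex.mul_conj _
  have hr0 : 0 ≤ ∑ j, Complex.normSq (C 0 j) := Finset.sum_nonneg fun j _ => Complex.normSq_nonneg _
  rw [hr] at hsc
  generalize (∑ j, Complex.normSq (C 0 j)) = r at hsc hr0
  have hrne : r ≠ 0 := by
    rintro rfl
    rw [Complex.ofReal_zero, zero_smul] at hsc
    open scoped ComplexOrder in
    exact hA (Matrix.self_mul_conjTranspose_eq_zero.1 hsc)
  have hrpos : 0 < r := lt_of_le_of_ne hr0 hrne.symm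
  have hU : (((Real.sqrt r)⁻¹ : ℝ) : ℂ) • C * ((((Real.sqrt r)⁻¹ : ℝ) : ℂ) • C)ᴴ = 1 := by
    rw [Matrix.conjTranspose_smul, Matrix.smul_mul, Matrix.mul_smul, hsc, smul_smul, smul_smul]
    have : (((Real.sqrt r)⁻¹ : ℝ) : ℂ) * (star (((Real.sqrt r)⁻¹ : ℝ) : ℂ) * (r : ℂ)) = 1 := by
      have e : star (((Real.sqrt r)⁻¹ : ℝ) : ℂ) = (((Real.sqrt r)⁻¹ : ℝ) : ℂ) := Complex.conj_ofReal _
      rw [e, ← Complex.ofReal_mul, ← Complex.ofReal_mul, ← mul_assoc, ← mul_inv,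
        Real.mul_self_sqrt hr0, inv_mul_cancel₀ hrne, Complex.ofReal_one]
    rw [mul_assoc, this, one_smul]
  refine ⟨(((Real.sqrt r)⁻¹ : ℝ) : ℂ) • C, Matrix.mem_unitaryGroup_iff.2 hU, fun v => ?_⟩
  rw [Matrix.smul_mul, hC, ← Matrix.mul_smul, mul_assoc, hU, mul_one]

/-- Extension of a Lagrangian semibasis to a symplectic map. -/
lemma exists_symp (hp : d.Prime) (h2 : (2 : ZMod d) * 2⁻¹ = 1) (v : Fin n → V d n)
    (hli : LinearIndependent (ZMod d) v) (hv : ∀ i j, symp d n (v i) (v j) = 0) :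
    ∃ S : V d n →ₗ[ZMod d] V d n, (∀ u v, symp d n (S u) (S v) = symp d n u v) ∧
      ∀ i, S (Pi.single i 1, 0) = v i := by
  haveI := Fact.mk hp
  let L : V d n →ₗ[ZMod d] (Fin n → ZMod d) := LinearMap.pi fun i => symp d n (v i)
  have hL : LinearMap.range L = ⊤ := by
    by_contra hne
    obtain ⟨f, hf, hle⟩ := Submodule.exists_le_ker_of_lt_top _ (lt_top_iff_ne_top.2 hne)
    apply hf
    have h1 : ∀ w, f (L w) = 0 := fun w => hle ⟨w, rfl⟩
    have h3 : ∑ i, f (Pi.single i 1) • v i = 0 := by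
      apply symp_nondeg
      intro w
      rw [← h1 w, LinearMap.pi_apply_eq_sum_univ f (L w)]
      simp [L, mul_comm, Finset.sum_apply]
      apply Finset.sum_congr rfl
      intro i _
      congr 2
      ext j; simp [Pi.single_apply, eq_comm]
    have h4 := Fintype.linearIndependent_iff.1 hli _ h3
    apply LinearMap.pi_ext'
    intro i
    ext
    simpa using h4 i
  have hw : ∀ j, ∃ w, L w = Pi.single j 1 := fun j => LinearMap.range_eq_top.1 hL _
  choose w hw using hw
  have hvw : ∀ i j, symp d n (v i) (w j) = if i = j then 1 else 0 := by
    intro i j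
    have := congrFun (hw j) i
    simpa [L, Pi.single_apply] using this
  have hwv : ∀ i j, symp d n (w i) (v j) = if i = j then -1 else 0 := by
    intro i j
    rw [symp_swap, hvw]
    by_cases h : i = j
    · simp [h]
    · simp [h, Ne.symm h]
  let w' : Fin n → V d n := fun j => w j + ∑ k, (-(2⁻¹ * symp d n (w j) (w k))) • v k
  have hvw' : ∀ i j, symp d n (v i) (w' j) = if i = j then 1 else 0 := by
    intro i j
    simp [w', hvw, hv]
  have hwv' : ∀ i j, symp d n (w' i) (v j) = if i = j then -1 else 0 := by
    intro i j
    simp [w', hwv, hv]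
  have hww' : ∀ i j, symp d n (w' i) (w' j) = 0 := by
    intro i j
    simp [w', hwv, hvw, hv]
    rw [symp_swap (w j) (w i)]
    linear_combination (- symp d n (w i) (w j)) * h2
  let S : V d n →ₗ[ZMod d] V d n :=
    (Fintype.linearCombination (ZMod d) v).coprod (Fintype.linearCombination (ZMod d) w')
  have hSa : ∀ u, S u = ∑ i, u.1 i • v i + ∑ i, u.2 i • w' i := by
    intro u
    simp [S, Fintype.linearCombination_apply]
  refine ⟨S, ?_, ?_⟩
  · intro a b
    rw [hSa, hSa]
    simp [hvw', hwv', hww', hv, symp_def a b, dotProduct]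
    rw [sub_eq_add_neg]
    congr 1
    simp [mul_comm]
  · intro i
    rw [hSa]
    simp [Pi.single_apply]

lemma CH2_iff {C : Mat d n} : C ∈ CH d n 2 ↔ C ∈ Matrix.unitaryGroup (Fin n → ZMod d) ℂ ∧
    ∀ P ∈ Pauli d n, C * P * Cᴴ ∈ Pauli d n := Iff.rfl

lemma CHs_iff {k : ℕ} {C : Mat d n} : C ∈ CH d n (k+2) ↔
    C ∈ Matrix.unitaryGroup (Fin n → ZMod d) ℂ ∧
    ∀ P ∈ Pauli d n, C * P * Cᴴ ∈ CH d n (k+1) := Iff.rfl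

lemma uni {C : Mat d n} (h : C ∈ Matrix.unitaryGroup (Fin n → ZMod d) ℂ) : C * Cᴴ = 1 :=
  Matrix.mem_unitaryGroup_iff.1 h
lemma uni' {C : Mat d n} (h : C ∈ Matrix.unitaryGroup (Fin n → ZMod d) ℂ) : Cᴴ * C = 1 :=
  Matrix.mem_unitaryGroup_iff'.1 h
lemma uniH {C : Mat d n} (h : C ∈ Matrix.unitaryGroup (Fin n → ZMod d) ℂ) :
    Cᴴ ∈ Matrix.unitaryGroup (Fin n → ZMod d) ℂ := by
  rw [Matrix.mem_unitaryGroup_iff, Matrix.star_eq_conjTranspose, conjTranspose_conjTranspose]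
  exact uni' h

lemma exists_cliff (hp : d.Prime) (h2 : (2 : ZMod d) * 2⁻¹ = 1) (v : Fin n → V d n)
    (hli : LinearIndependent (ZMod d) v) (hv : ∀ i j, symp d n (v i) (v j) = 0) :
    ∃ C ∈ CH d n 2, ∀ i, C * Zi d n i * Cᴴ = T (v i) := by
  obtain ⟨S, hS, hSv⟩ := exists_symp hp h2 v hli hv
  obtain ⟨C, hC, hCT⟩ := exists_unitary h2 S hS
  refine ⟨C, CH2_iff.2 ⟨hC, ?_⟩, ?_⟩
  · intro P hP
    obtain ⟨c, u, rfl⟩ := mem_Pauli.1 hP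
    rw [Matrix.mul_smul, Matrix.smul_mul, hCT]
    exact mem_Pauli.2 ⟨c, _, rfl⟩
  · intro i
    rw [Zi, ZP_eq, hCT, hSv]

lemma conj_cancel {C P : Mat d n} (h : C ∈ Matrix.unitaryGroup (Fin n → ZMod d) ℂ) :
    Cᴴ * (C * P * Cᴴ) * C = P := by
  rw [show Cᴴ * (C * P * Cᴴ) * C = (Cᴴ * C) * P * (Cᴴ * C) by simp only [mul_assoc], uni' h]
  simp

lemma Pauli_finite : (Pauli d n).Finite := by
  have : Pauli d n ⊆ Set.range fun x : ZMod d × V d n => omegaPow d x.1 • T x.2 := by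
    intro M hM
    obtain ⟨c, v, rfl⟩ := mem_Pauli.1 hM
    exact ⟨(c, v), rfl⟩
  exact (Set.finite_range _).subset this

lemma CH2_star {C : Mat d n} (hC : C ∈ CH d n 2) : Cᴴ ∈ CH d n 2 := by
  obtain ⟨hu, hc⟩ := CH2_iff.1 hC
  refine CH2_iff.2 ⟨uniH hu, fun P hP => ?_⟩
  haveI : Finite (Pauli d n) := Pauli_finite
  let f : Pauli d n → Pauli d n := fun P => ⟨C * P * Cᴴ, hc _ P.2⟩
  have hf : Function.Injective f := by
    intro P Q h
    have h1 : C * P.1 * Cᴴ = C * Q.1 * Cᴴ := congrArg Subtype.val h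
    apply Subtype.ext
    rw [← conj_cancel (P := P.1) hu, h1, conj_cancel hu]
  obtain ⟨Q, hQ⟩ := Finite.surjective_of_injective hf ⟨P, hP⟩
  have h1 : C * Q.1 * Cᴴ = P := congrArg Subtype.val hQ
  rw [← h1, conjTranspose_conjTranspose, conj_cancel hu]
  exact Q.2

lemma CH_mul (k : ℕ) : ∀ G ∈ CH d n (k+2), ∀ C ∈ CH d n 2,
    C * G ∈ CH d n (k+2) ∧ G * C ∈ CH d n (k+2) := by
  have right : ∀ k, ∀ G ∈ CH d n (k+2), ∀ C ∈ CH d n 2, G * C ∈ CH d n (k+2) := by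
    intro k G hG C hC
    refine CHs_iff.2 ⟨mul_mem (CHs_iff.1 hG).1 (CH2_iff.1 hC).1, fun P hP => ?_⟩
    have := (CHs_iff.1 hG).2 _ ((CH2_iff.1 hC).2 P hP)
    rw [Matrix.conjTranspose_mul]
    simpa only [mul_assoc] using this
  induction k with
  | zero => exact fun G hG C hC => ⟨right 0 C hC G hG, right 0 G hG C hC⟩
  | succ k ih =>
    intro G hG C hC
    refine ⟨?_, right _ G hG C hC⟩
    refine CHs_iff.2 ⟨mul_mem (CH2_iff.1 hC).1 (CHs_iff.1 hG).1, fun P hP => ?_⟩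
    have h1 := (CHs_iff.1 hG).2 P hP
    have h3 := (ih _ (ih _ h1 C hC).1 _ (CH2_star hC)).2
    rw [Matrix.conjTranspose_mul]
    simpa only [mul_assoc] using h3

lemma T_CH2 (h2 : (2 : ZMod d) * 2⁻¹ = 1) (u : V d n) : T u ∈ CH d n 2 := by
  refine CH2_iff.2 ⟨Matrix.mem_unitaryGroup_iff.2 (T_mul_star h2 u), fun P hP => ?_⟩
  obtain ⟨c, v, rfl⟩ := mem_Pauli.1 hP
  rw [Matrix.mul_smul, Matrix.smul_mul, T_comm h2, Matrix.smul_mul, mul_assoc, T_mul_star h2,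
    mul_one, smul_smul, ← w_add]
  exact mem_Pauli.2 ⟨_, _, rfl⟩

/-- Transport of Lagrangian semibases along a unitary. -/
lemma transport (h2 : (2 : ZMod d) * 2⁻¹ = 1) {G : Mat d n}
    (hG : G ∈ Matrix.unitaryGroup (Fin n → ZMod d) ℂ) (v v' : Fin n → V d n) (c : Fin n → ZMod d)
    (h : ∀ i, G * T (v i) * Gᴴ = omegaPow d (c i) • T (v' i))
    (hli : LinearIndependent (ZMod d) v) (hv : ∀ i j, symp d n (v i) (v j) = 0) :
    LinearIndependent (ZMod d) v' ∧ ∀ i j, symp d n (v' i) (v' j) = 0 := by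
  have hmul : ∀ A B : Mat d n, (G * A * Gᴴ) * (G * B * Gᴴ) = G * (A * B) * Gᴴ := by
    intro A B
    rw [show (G * A * Gᴴ) * (G * B * Gᴴ) = G * A * (Gᴴ * G) * B * Gᴴ by simp only [mul_assoc],
      uni' hG]
    simp only [mul_assoc, mul_one]
  constructor
  · let K : AddSubgroup (V d n × V d n) :=
      { carrier := {x | ∃ c, G * T x.1 * Gᴴ = omegaPow d c • T x.2}
        zero_mem' := ⟨0, by simp [T_zero, w_zero, uni hG]⟩
        add_mem' := by
          rintro a b ⟨c, hc⟩ ⟨c', hc'⟩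
          refine ⟨-(2⁻¹ * symp d n a.1 b.1) + (c + c' + 2⁻¹ * symp d n a.2 b.2), ?_⟩
          have e : T (a.1 + b.1) = omegaPow d (-(2⁻¹ * symp d n a.1 b.1)) • (T a.1 * T b.1) := by
            rw [T_mul h2, smul_smul, ← w_add]; simp [w_zero]
          rw [Prod.fst_add, Prod.snd_add, e, Matrix.mul_smul, Matrix.smul_mul, ← hmul, hc, hc',
            Matrix.smul_mul, Matrix.mul_smul, T_mul h2]
          simp only [smul_smul, w_add, mul_assoc]
        neg_mem' := by
          rintro a ⟨c, hc⟩
          refine ⟨-c, ?_⟩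
          rw [Prod.fst_neg, Prod.snd_neg, ← T_star h2, ← T_star h2, ← w_star,
            ← Matrix.conjTranspose_smul, ← hc]
          simp [mul_assoc] }
    let K' := AddSubgroup.toZModSubmodule d K
    rw [Fintype.linearIndependent_iff] at hli ⊢
    intro g hg
    apply hli g
    have hmem : ∑ i, g i • ((v i, v' i) : V d n × V d n) ∈ K' :=
      Submodule.sum_mem _ fun i _ => Submodule.smul_mem _ _ ⟨c i, h i⟩
    have hs : ∑ i, g i • ((v i, v' i) : V d n × V d n) = (∑ i, g i • v i, 0) := by
      rw [← hg]
      apply Prod.ext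
      · simp [Prod.fst_sum]
      · simp [Prod.snd_sum]
    rw [hs] at hmem
    obtain ⟨c', hc'⟩ := hmem
    simp only [T_zero] at hc'
    apply T_scalar h2 (c := omegaPow d c')
    rw [← conj_cancel (P := T _) hG, hc', Matrix.mul_smul, Matrix.smul_mul, mul_one, uni' hG]
  · intro i j
    apply symp_of_comm h2
    have h3 : (G * T (v i) * Gᴴ) * (G * T (v j) * Gᴴ) = (G * T (v j) * Gᴴ) * (G * T (v i) * Gᴴ) := by
      rw [hmul, hmul, T_comm h2, hv, w_zero, one_smul]
    rw [h, h, Matrix.smul_mul, Matrix.smul_mul, Matrix.mul_smul, Matrix.mul_smul, smul_smul,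
      smul_smul, mul_comm (omegaPow d (c i))] at h3
    exact smul_right_injective _ (mul_ne_zero (w_ne _) (w_ne _)) h3

lemma prod_conj {G : Mat d n} (hG : G ∈ Matrix.unitaryGroup (Fin n → ZMod d) ℂ)
    (R : (Fin n → ZMod d) → Mat d n) (h1 : R 0 = 1) (hm : ∀ a b, R (a + b) = R a * R b)
    (p : Fin n → ZMod d) :
    (List.ofFn fun j => (G * R (Pi.single j 1) * Gᴴ) ^ (p j).val).prod = G * R p * Gᴴ := by
  let φ : Multiplicative (Fin n → ZMod d) →* Mat d n :=
    { toFun := fun a => G * R a.toAdd * Gᴴ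
      map_one' := by simp [h1, uni hG]
      map_mul' := by
        intro a b
        rw [toAdd_mul, hm, show (G * R a.toAdd * Gᴴ) * (G * R b.toAdd * Gᴴ) =
          G * R a.toAdd * (Gᴴ * G) * R b.toAdd * Gᴴ by simp only [mul_assoc], uni' hG]
        simp [mul_assoc] }
  have h3 : ∀ j, (G * R (Pi.single j 1) * Gᴴ) ^ (p j).val =
      φ (Multiplicative.ofAdd (Pi.single j (p j))) := by
    intro j
    have : (Multiplicative.ofAdd (Pi.single j (p j)) : Multiplicative (Fin n → ZMod d)) =
        (Multiplicative.ofAdd (Pi.single j 1)) ^ (p j).val := by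
      rw [← ofAdd_nsmul, ← Pi.single_smul]
      simp
    rw [this, map_pow]
    rfl
  simp only [h3]
  have h4 : (List.ofFn fun j => φ (Multiplicative.ofAdd (Pi.single j (p j)))) =
      (List.ofFn fun j => (Multiplicative.ofAdd (Pi.single j (p j)) :
        Multiplicative (Fin n → ZMod d))).map φ := by
    rw [List.map_ofFn]; rfl
  rw [h4, ← map_list_prod, List.prod_ofFn, ← ofAdd_sum, Finset.univ_sum_single]
  rfl

lemma tuple_eq (h2 : (2 : ZMod d) * 2⁻¹ = 1) {G : Mat d n}
    (hG : G ∈ Matrix.unitaryGroup (Fin n → ZMod d) ℂ) (p q : Fin n → ZMod d) :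
    (List.ofFn fun j => (G * Zi d n j * Gᴴ) ^ (p j).val).prod *
      (List.ofFn fun j => (G * Xi d n j * Gᴴ) ^ (q j).val).prod =
    omegaPow d (2⁻¹ * (p ⬝ᵥ q)) • (G * T (p, q) * Gᴴ) := by
  have hz := prod_conj hG (ZP d n) (by rw [ZP_eq]; exact T_zero)
    (fun a b => by simp only [ZP_eq, T_mul h2]; simp [symp_def, w_zero]) p
  have hx := prod_conj hG (XQ d n) (by rw [XQ_eq]; exact T_zero)
    (fun a b => by simp only [XQ_eq, T_mul h2]; simp [symp_def, w_zero]) q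
  unfold Zi Xi
  rw [hz, hx, T, Matrix.mul_smul, Matrix.smul_mul, smul_smul, ← w_add, add_neg_cancel, w_zero,
    one_smul, show (G * ZP d n p * Gᴴ) * (G * XQ d n q * Gᴴ) =
          G * ZP d n p * (Gᴴ * G) * XQ d n q * Gᴴ by simp only [mul_assoc], uni' hG]
  simp [mul_assoc]

lemma tuple_iff (h2 : (2 : ZMod d) * 2⁻¹ = 1) {G : Mat d n}
    (hG : G ∈ Matrix.unitaryGroup (Fin n → ZMod d) ℂ) (p q : Fin n → ZMod d) :
    (List.ofFn fun j => (G * Zi d n j * Gᴴ) ^ (p j).val).prod *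
      (List.ofFn fun j => (G * Xi d n j * Gᴴ) ^ (q j).val).prod ∈ Pauli d n ↔
    ∃ c v', G * T (p, q) * Gᴴ = omegaPow d c • T v' := by
  rw [tuple_eq h2 hG, mem_Pauli]
  constructor
  · rintro ⟨c, v, h⟩
    refine ⟨-(2⁻¹ * (p ⬝ᵥ q)) + c, v, ?_⟩
    rw [w_add, ← smul_smul, ← h, smul_smul, ← w_add]
    simp [w_zero]
  · rintro ⟨c, v, h⟩
    refine ⟨2⁻¹ * (p ⬝ᵥ q) + c, v, ?_⟩
    rw [h, smul_smul, w_add]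

end SC

/-- A `k`-th level gate `G` (for `k ≥ 3`) with conjugate tuple `(Uᵢ, Vᵢ)` is semi-Clifford
iff there is a Lagrangian semibasis `{(pᵢ, qᵢ)}` of `(ZMod d)^{2n}` such that each
`U^{pᵢ} V^{qᵢ}` is a Pauli gate. -/
theorem stmt14 (d n k : ℕ) [NeZero d] (hp : Nat.Prime d) (hodd : Odd d) (hk : 3 ≤ k)
    (G : Mat d n) (hG : G ∈ CH d n k) :
    (∃ C₁ ∈ CH d n 2, ∃ C₂ ∈ CH d n 2, ∃ D ∈ CH d n k, D.IsDiag ∧ G = C₁ * D * C₂) ↔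
    ∃ p q : Fin n → (Fin n → ZMod d),
      LinearIndependent (ZMod d)
        (fun i => ((p i, q i) : (Fin n → ZMod d) × (Fin n → ZMod d))) ∧
      (∀ i j, p i ⬝ᵥ q j - p j ⬝ᵥ q i = 0) ∧
      ∀ i, (List.ofFn fun j => (G * Zi d n j * Gᴴ) ^ (p i j).val).prod *
           (List.ofFn fun j => (G * Xi d n j * Gᴴ) ^ (q i j).val).prod ∈ Pauli d n := by
  have h2 := SC.two_inv hp hodd
  obtain ⟨k, rfl⟩ : ∃ m, k = m + 2 := ⟨k - 2, by omega⟩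
  have hGu := (SC.CHs_iff.1 hG).1
  constructor
  · rintro ⟨C₁, hC₁, C₂, hC₂, D, hD, hdiag, hGe⟩
    have hDu := (SC.CHs_iff.1 hD).1
    have hC₂' := SC.CH2_star hC₂
    have hZ : ∀ i, ∃ c v', C₂ᴴ * Zi d n i * C₂ᴴᴴ = omegaPow d c • SC.T v' := fun i =>
      SC.mem_Pauli.1 ((SC.CH2_iff.1 hC₂').2 _
        (SC.mem_Pauli.2 ⟨0, (Pi.single i 1, 0), by rw [SC.w_zero, one_smul, Zi, SC.ZP_eq]⟩))
    choose c v' hv' using hZ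
    obtain ⟨hli, hiso⟩ := SC.transport h2 (SC.CH2_iff.1 hC₂').1
      (fun i => ((Pi.single i 1, 0) : SC.V d n)) v' c
      (fun i => by rw [← hv', Zi, SC.ZP_eq])
      (by
        rw [Fintype.linearIndependent_iff]
        intro g hg i
        have := congrFun (congrArg Prod.fst hg) i
        simpa [Prod.fst_sum, Finset.sum_apply, Pi.single_apply] using this)
      (fun i j => by simp [SC.symp_def])
    refine ⟨fun i => (v' i).1, fun i => (v' i).2, hli, fun i j => hiso i j, fun i => ?_⟩
    rw [SC.tuple_iff h2 hGu]
    obtain ⟨c', w, hw⟩ := SC.mem_Pauli.1 ((SC.CH2_iff.1 hC₁).2 (Zi d n i)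
        (SC.mem_Pauli.2 ⟨0, (Pi.single i 1, 0), by rw [SC.w_zero, one_smul, Zi, SC.ZP_eq]⟩))
    refine ⟨-(c i) + c', w, ?_⟩
    have e1 : SC.T ((v' i).1, (v' i).2) = omegaPow d (-(c i)) • (C₂ᴴ * Zi d n i * C₂) := by
      rw [conjTranspose_conjTranspose] at hv'
      rw [hv', smul_smul, ← SC.w_add, neg_add_cancel, SC.w_zero, one_smul]
    have e2 : D * Zi d n i * Dᴴ = Zi d n i := by
      have : D * Zi d n i = Zi d n i * D := by
        rw [← hdiag.diagonal_diag, Zi, ZP, Matrix.diagonal_mul_diagonal,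
          Matrix.diagonal_mul_diagonal]
        congr 1; ext; ring
      rw [this, mul_assoc, SC.uni hDu, mul_one]
    have e3 : G * (C₂ᴴ * Zi d n i * C₂) * Gᴴ = C₁ * Zi d n i * C₁ᴴ := by
      rw [hGe, Matrix.conjTranspose_mul, Matrix.conjTranspose_mul]
      rw [show C₁ * D * C₂ * (C₂ᴴ * Zi d n i * C₂) * (C₂ᴴ * (Dᴴ * C₁ᴴ)) =
        C₁ * (D * (C₂ * C₂ᴴ) * Zi d n i * (C₂ * C₂ᴴ) * Dᴴ) * C₁ᴴ by simp only [mul_assoc],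
        SC.uni (SC.CH2_iff.1 hC₂).1, mul_one, mul_one, e2]
    rw [e1, Matrix.mul_smul, Matrix.smul_mul, e3, hw, smul_smul, SC.w_add]
  · rintro ⟨p, q, hli, hiso, hP⟩
    have hT : ∀ i, ∃ c v', G * SC.T (p i, q i) * Gᴴ = omegaPow d c • SC.T v' := fun i =>
      (SC.tuple_iff h2 hGu _ _).1 (hP i)
    choose c v' hv' using hT
    obtain ⟨hli', hiso'⟩ := SC.transport h2 hGu (fun i => (p i, q i)) v' c hv' hli
      (fun i j => hiso i j)
    obtain ⟨A, hA, hAZ⟩ := SC.exists_cliff hp h2 (fun i => (p i, q i)) hli (fun i j => hiso i j)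
    obtain ⟨B, hB, hBZ⟩ := SC.exists_cliff hp h2 v' hli' hiso'
    have hX := SC.T_CH2 (n := n) h2 (0, c)
    have hXu := (SC.CH2_iff.1 hX).1
    have hAu := (SC.CH2_iff.1 hA).1
    have hBu := (SC.CH2_iff.1 hB).1
    have hXZ : ∀ i, SC.T (0, c) * Zi d n i = omegaPow d (-(c i)) • (Zi d n i * SC.T (0, c)) := by
      intro i
      rw [Zi, SC.ZP_eq, SC.T_comm h2]
      simp [SC.symp_def]
    generalize SC.T (0, c) = X at hX hXu hXZ
    have hD : X * (Bᴴ * (G * A)) ∈ CH d n (k+2) :=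
      (SC.CH_mul k _ (SC.CH_mul k _ (SC.CH_mul k _ hG _ hA).2 _ (SC.CH2_star hB)).1 _ hX).1
    refine ⟨B * Xᴴ, (SC.CH_mul 0 _ hB _ (SC.CH2_star hX)).2, Aᴴ, SC.CH2_star hA, _, hD, ?_, ?_⟩
    · apply SC.diag_of_comm
      intro i
      have e1 : A * Zi d n i = SC.T (p i, q i) * A := by
        rw [← hAZ, mul_assoc, SC.uni' hAu, mul_one]
      have e2 : G * SC.T (p i, q i) = omegaPow d (c i) • (SC.T (v' i) * G) := by
        rw [← Matrix.smul_mul, ← hv', mul_assoc, SC.uni' hGu, mul_one]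
      have e3 : Bᴴ * SC.T (v' i) = Zi d n i * Bᴴ := by
        rw [← hBZ, ← mul_assoc, ← mul_assoc, SC.uni' hBu, one_mul]
      calc X * (Bᴴ * (G * A)) * Zi d n i = X * (Bᴴ * (G * (A * Zi d n i))) := by
            simp only [mul_assoc]
        _ = X * (Bᴴ * ((G * SC.T (p i, q i)) * A)) := by rw [e1, mul_assoc]
        _ = omegaPow d (c i) • (X * ((Bᴴ * SC.T (v' i)) * (G * A))) := by
            rw [e2]; simp only [Matrix.smul_mul, Matrix.mul_smul, mul_assoc]
        _ = omegaPow d (c i) • ((X * Zi d n i) * (Bᴴ * (G * A))) := by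
            rw [e3]; simp only [mul_assoc]
        _ = Zi d n i * (X * (Bᴴ * (G * A))) := by
            rw [hXZ, Matrix.smul_mul, smul_smul, ← SC.w_add, add_neg_cancel, SC.w_zero, one_smul,
              mul_assoc]
    · rw [show B * Xᴴ * (X * (Bᴴ * (G * A))) * Aᴴ = B * (Xᴴ * X) * Bᴴ * G * (A * Aᴴ) by
        simp only [mul_assoc], SC.uni' hXu, SC.uni hAu, mul_one, mul_one, SC.uni hBu, one_mul]

end
end
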